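/- arXiv:1711.02170 — 4 statements merged into one kernel-verified Lean document; each statement's English description precedes it below -/
import Mathlib

section
/- Let d ∈ {1, 2, 3, 7, 11, 19, 43, 67, 163}, let K = ℚ(√−d) with ring of integers O_K, and let PGL₂(O_K) denote the quotient of the group GL₂(O_K) of invertible 2×2 matrices over O_K by its center. Then for every prime number ℓ ≥ 5, every group homomorphism from PGL₂(O_K) to the additive group ℤ/ℓℤ is trivial (equivalently, the group cohomology H¹(PGL₂(O_K), F_ℓ) with trivial coefficients vanishes). -/
open NumberField Matrix

namespace PGLProof

section general
variable {R : Type} [CommRing R] {ℓ : ℕ}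

/-- A matrix of determinant `δ` with `δ ^ 2 = 1`, as an element of `GL₂`. -/
def mk4 (δ a b c e : R) (hδ : δ * δ = 1) (h : a * e - b * c = δ) : GL (Fin 2) R :=
  ⟨!![a, b; c, e], !![δ * e, -(δ * b); -(δ * c), δ * a],
    by
      ext i j
      fin_cases i <;> fin_cases j <;> simp [Matrix.mul_apply, Fin.sum_univ_two] <;>
        first | linear_combination δ * h + hδ | ring1,
    by
      ext i j
      fin_cases i <;> fin_cases j <;> simp [Matrix.mul_apply, Fin.sum_univ_two] <;>
        first | linear_combination δ * h + hδ | ring1⟩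

/-- Additive form of a homomorphism. -/
def fv (F : GL (Fin 2) R →* Multiplicative (ZMod ℓ)) (M : GL (Fin 2) R) : ZMod ℓ :=
  (F M).toAdd

lemma fv_mul (F : GL (Fin 2) R →* Multiplicative (ZMod ℓ)) (M N : GL (Fin 2) R) :
    fv F (M * N) = fv F M + fv F N := by simp [fv]

lemma fv_one (F : GL (Fin 2) R →* Multiplicative (ZMod ℓ)) : fv F 1 = 0 := by simp [fv]

lemma fv_pow (F : GL (Fin 2) R →* Multiplicative (ZMod ℓ)) (M : GL (Fin 2) R) (n : ℕ) :
    fv F (M ^ n) = n * fv F M := by simp [fv]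

lemma gl_ext (M N : GL (Fin 2) R) (h00 : M 0 0 = N 0 0) (h01 : M 0 1 = N 0 1)
    (h10 : M 1 0 = N 1 0) (h11 : M 1 1 = N 1 1) : M = N := by
  ext i j
  fin_cases i <;> fin_cases j <;> assumption

lemma mul00 (M N : GL (Fin 2) R) : (M * N) 0 0 = M 0 0 * N 0 0 + M 0 1 * N 1 0 := by
  simp [Matrix.mul_apply, Fin.sum_univ_two]
lemma mul01 (M N : GL (Fin 2) R) : (M * N) 0 1 = M 0 0 * N 0 1 + M 0 1 * N 1 1 := by
  simp [Matrix.mul_apply, Fin.sum_univ_two]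
lemma mul10 (M N : GL (Fin 2) R) : (M * N) 1 0 = M 1 0 * N 0 0 + M 1 1 * N 1 0 := by
  simp [Matrix.mul_apply, Fin.sum_univ_two]
lemma mul11 (M N : GL (Fin 2) R) : (M * N) 1 1 = M 1 0 * N 0 1 + M 1 1 * N 1 1 := by
  simp [Matrix.mul_apply, Fin.sum_univ_two]

section entries
variable (δ a b c e : R) (hδ : δ * δ = 1) (h : a * e - b * c = δ)
@[simp] lemma mk4_00 : (mk4 δ a b c e hδ h) 0 0 = a := rfl
@[simp] lemma mk4_01 : (mk4 δ a b c e hδ h) 0 1 = b := rfl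
@[simp] lemma mk4_10 : (mk4 δ a b c e hδ h) 1 0 = c := rfl
@[simp] lemma mk4_11 : (mk4 δ a b c e hδ h) 1 1 = e := rfl
end entries

lemma two_cancel (hℓ : ℓ.Prime) (hℓ5 : 5 ≤ ℓ) {x : ZMod ℓ} (h : 2 * x = 0) : x = 0 := by
  have := Fact.mk hℓ
  rcases mul_eq_zero.mp h with h | h
  · have : ((2 : ℕ) : ZMod ℓ) = 0 := by exact_mod_cast h
    rw [ZMod.natCast_eq_zero_iff] at this
    have := Nat.le_of_dvd (by norm_num) this
    omega
  · exact h

lemma three_cancel (hℓ : ℓ.Prime) (hℓ5 : 5 ≤ ℓ) {x : ZMod ℓ} (h : 3 * x = 0) : x = 0 := by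
  have := Fact.mk hℓ
  rcases mul_eq_zero.mp h with h | h
  · have : ((3 : ℕ) : ZMod ℓ) = 0 := by exact_mod_cast h
    rw [ZMod.natCast_eq_zero_iff] at this
    have := Nat.le_of_dvd (by norm_num) this
    omega
  · exact h

variable (hℓ : ℓ.Prime) (hℓ5 : 5 ≤ ℓ) (F : GL (Fin 2) R →* Multiplicative (ZMod ℓ))

include hℓ hℓ5 in
lemma fv_unip (M : GL (Fin 2) R) (h00 : M 0 0 = 1) (h10 : M 1 0 = 0) (h11 : M 1 1 = 1) :
    fv F M = 0 := by
  let D : GL (Fin 2) R := mk4 (-1) (-1) 0 0 1 (by ring) (by ring)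
  let N : GL (Fin 2) R := mk4 1 1 (-(M 0 1)) 0 1 (by ring) (by ring)
  have h1 : D * M = N * D := by
    apply gl_ext <;> simp [mul00, mul01, mul10, mul11, h00, h10, h11, D, N]
  have h2 : N * M = 1 := by
    apply gl_ext <;> simp [mul00, mul01, mul10, mul11, h00, h10, h11, N]
  have h1 := congrArg (fv F) h1
  have h2 := congrArg (fv F) h2
  rw [fv_mul, fv_mul] at h1
  rw [fv_mul, fv_one] at h2
  apply two_cancel hℓ hℓ5
  linear_combination h1 + h2

lemma tri_pow (M : GL (Fin 2) R) (h10 : M 1 0 = 0) (n : ℕ) :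
    (M ^ n) 1 0 = 0 ∧ (M ^ n) 0 0 = (M 0 0) ^ n ∧ (M ^ n) 1 1 = (M 1 1) ^ n := by
  induction n with
  | zero => simp
  | succ k ih =>
    obtain ⟨i1, i2, i3⟩ := ih
    rw [pow_succ, mul10, mul00, mul11, i1, i2, i3, h10]
    refine ⟨by ring, by ring, by ring⟩

variable (hu : ∀ u : R, IsUnit u → u ^ 12 = 1)

include hℓ hℓ5 hu in
lemma fv_tri (M : GL (Fin 2) R) (h10 : M 1 0 = 0) : fv F M = 0 := by
  have hd : IsUnit (M 0 0 * M 1 1) := by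
    have := (Matrix.isUnit_iff_isUnit_det _).mp M.isUnit
    rw [Matrix.det_fin_two] at this
    simpa [h10] using this
  obtain ⟨i1, i2, i3⟩ := tri_pow M h10 12
  rw [hu _ (isUnit_of_mul_isUnit_left hd)] at i2
  rw [hu _ (isUnit_of_mul_isUnit_right hd)] at i3
  have := fv_unip hℓ hℓ5 F (M ^ 12) i2 i1 i3
  rw [fv_pow] at this
  apply two_cancel hℓ hℓ5
  apply two_cancel hℓ hℓ5
  apply three_cancel hℓ hℓ5
  push_cast at this
  linear_combination this

include hℓ hℓ5 hu in
lemma fv_col (M N : GL (Fin 2) R) (h0 : M 0 0 = N 0 0) (h1 : M 1 0 = N 1 0) :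
    fv F M = fv F N := by
  have h : (M⁻¹ * N) 1 0 = 0 := by
    have e : (M⁻¹ * M) 1 0 = 0 := by simp
    rw [mul10] at e ⊢
    rw [← h0, ← h1, e]
  have := fv_tri hℓ hℓ5 F hu _ h
  rw [fv_mul] at this
  have h2 := congrArg (fv F) (inv_mul_cancel M)
  rw [fv_mul, fv_one] at h2
  linear_combination h2 - this

open Classical in
/-- Value of the homomorphism on any invertible matrix with first column `(a, c)`. -/
noncomputable def hv (a c : R) : ZMod ℓ :=
  if H : ∃ M : GL (Fin 2) R, M 0 0 = a ∧ M 1 0 = c then fv F H.choose else 0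

include hℓ hℓ5 hu in
lemma hv_eq (M : GL (Fin 2) R) (a c : R) (ha : M 0 0 = a) (hc : M 1 0 = c) :
    hv F a c = fv F M := by
  have H : ∃ M : GL (Fin 2) R, M 0 0 = a ∧ M 1 0 = c := ⟨M, ha, hc⟩
  rw [hv, dif_pos H]
  exact fv_col hℓ hℓ5 F hu _ _ (H.choose_spec.1.trans ha.symm) (H.choose_spec.2.trans hc.symm)

include hℓ hℓ5 hu in
/-- The basic three-term relation. -/
lemma rel (σ τ κ a b c e x u y v r q p k : R)
    (H : (σ * σ = 1 ∧ τ * τ = 1 ∧ κ * κ = 1) ∧ a * e - b * c = 1 ∧ x * v - u * y = 1 ∧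
      τ * (a * (σ * x + r * y) + b * y) + q * (c * (σ * x + r * y) + e * y) = p ∧
      κ * (c * (σ * x + r * y) + e * y) = k) :
    hv F a c + hv F x y = hv F p k := by
  obtain ⟨⟨hσ, hτ, hκ⟩, h1, h2, h3, h4⟩ := H
  let A := mk4 1 a b c e (by ring) h1
  let X := mk4 1 x u y v (by ring) h2
  let S := mk4 σ σ r 0 1 hσ (by ring)
  let T := mk4 (τ * κ) τ q 0 κ (by linear_combination κ * κ * hτ + hκ) (by ring)
  rw [hv_eq hℓ hℓ5 F hu A a c rfl rfl, hv_eq hℓ hℓ5 F hu X x y rfl rfl,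
    hv_eq hℓ hℓ5 F hu (T * (A * (S * X))) p k, fv_mul, fv_mul, fv_mul,
    fv_tri hℓ hℓ5 F hu S rfl, fv_tri hℓ hℓ5 F hu T rfl]
  · ring
  · simp only [mul00, mul10, A, X, S, T, mk4_00, mk4_01, mk4_10, mk4_11]
    linear_combination h3
  · simp only [mul00, mul10, A, X, S, T, mk4_00, mk4_01, mk4_10, mk4_11]
    linear_combination h4

include hℓ hℓ5 hu in
lemma hv_unit : hv F (1 : R) 0 = 0 := by
  rw [hv_eq hℓ hℓ5 F hu 1 1 0 (by simp) (by simp), fv_one]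

/-- There is a matrix with second row `(n, -p)` on which the homomorphism vanishes. -/
def Z (p n : R) : Prop := ∃ A : GL (Fin 2) R, A 1 0 = n ∧ A 1 1 = -p ∧ fv F A = 0

include hℓ hℓ5 hu in
lemma Z_of (p n b e : R) (h : p * e - b * n = 1) (h0 : hv F p n = 0) : Z F p n := by
  let M := mk4 1 p b n e (by ring) h
  let A := mk4 1 (-e) b n (-p) (by ring) (by linear_combination h)
  refine ⟨A, rfl, rfl, ?_⟩
  have h1 : (A * M) 1 0 = 0 := by
    simp only [mul10, A, M, mk4_00, mk4_10, mk4_11]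
    ring
  have h2 := fv_tri hℓ hℓ5 F hu _ h1
  rw [hv_eq hℓ hℓ5 F hu M p n rfl rfl] at h0
  rw [fv_mul] at h2
  linear_combination h2 - h0

include hℓ hℓ5 hu in
lemma Z_tr (σ r p n p' : R) (hσ : σ * σ = 1) (h : Z F p n) (hp : p' = σ * p + r * n) :
    Z F p' n := by
  obtain ⟨A, h1, h2, h3⟩ := h
  refine ⟨A * mk4 σ 1 (-r) 0 σ hσ (by ring), ?_, ?_, ?_⟩
  · simp [mul10, h1]
  · simp only [mul11, h1, h2, hp, mk4_01, mk4_11]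
    ring
  · rw [fv_mul, h3, fv_tri hℓ hℓ5 F hu _ (by simp), add_zero]

include hℓ hℓ5 hu in
/-- The Euclidean-type reduction: if the discs with trivial value cover, `F` is trivial. -/
theorem fv_zero (N : R → ℕ)
    (hcov : ∀ a c : R, c ≠ 0 → ∃ p n, Z F p n ∧ N (n * a - p * c) < N c)
    (M : GL (Fin 2) R) : fv F M = 0 := by
  induction h : N (M 1 0) using Nat.strong_induction_on generalizing M with
  | _ k ih =>
    by_cases hc : M 1 0 = 0
    · exact fv_tri hℓ hℓ5 F hu M hc
    · obtain ⟨p, n, ⟨A, h1, h2, h3⟩, hlt⟩ := hcov (M 0 0) (M 1 0) hc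
      have h4 : (A * M) 1 0 = n * M 0 0 - p * M 1 0 := by
        rw [mul10, h1, h2]
        ring
      have := ih _ (by rw [← h, h4]; exact hlt) (A * M) rfl
      rw [fv_mul, h3] at this
      simpa using this
end general

/-- The quadratic ring `ℤ[ω]` with `ω ^ 2 = a + b ω`. -/
abbrev Q (a b : ℤ) := QuadraticAlgebra ℤ a b

section certificates
variable {ℓ : ℕ} (hℓ : ℓ.Prime) (hℓ5 : 5 ≤ ℓ)

/-- `hv` in integral coordinates. -/
noncomputable def hz {A B : ℤ} (F : GL (Fin 2) (Q A B) →* Multiplicative (ZMod ℓ))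
    (a₀ a₁ c₀ c₁ : ℤ) : ZMod ℓ := hv F ⟨a₀, a₁⟩ ⟨c₀, c₁⟩

include hℓ hℓ5 in
/-- The three-term relation in integral coordinates. -/
lemma relz {A B : ℤ} (F : GL (Fin 2) (Q A B) →* Multiplicative (ZMod ℓ))
    (hu : ∀ u : Q A B, IsUnit u → u ^ 12 = 1)
    (a₀ a₁ b₀ b₁ c₀ c₁ e₀ e₁ x₀ x₁ u₀ u₁ y₀ y₁ v₀ v₁ σ r₀ r₁ τ q₀ q₁ κ p₀ p₁ k₀ k₁ : ℤ)
    (H : let a : Q A B := ⟨a₀, a₁⟩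
      let b : Q A B := ⟨b₀, b₁⟩
      let c : Q A B := ⟨c₀, c₁⟩
      let e : Q A B := ⟨e₀, e₁⟩
      let y : Q A B := ⟨y₀, y₁⟩
      let z : Q A B := ⟨σ, 0⟩ * ⟨x₀, x₁⟩ + ⟨r₀, r₁⟩ * y
      ((⟨σ, 0⟩ * ⟨σ, 0⟩ : Q A B) = 1 ∧ (⟨τ, 0⟩ * ⟨τ, 0⟩ : Q A B) = 1 ∧
        (⟨κ, 0⟩ * ⟨κ, 0⟩ : Q A B) = 1) ∧
      a * e - b * c = 1 ∧ (⟨x₀, x₁⟩ * ⟨v₀, v₁⟩ - ⟨u₀, u₁⟩ * y : Q A B) = 1 ∧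
      ⟨τ, 0⟩ * (a * z + b * y) + ⟨q₀, q₁⟩ * (c * z + e * y) = ⟨p₀, p₁⟩ ∧
      ⟨κ, 0⟩ * (c * z + e * y) = ⟨k₀, k₁⟩ := by decide) :
    hz F a₀ a₁ c₀ c₁ + hz F x₀ x₁ y₀ y₁ = hz F p₀ p₁ k₀ k₁ :=
  rel hℓ hℓ5 F hu _ _ _ _ _ _ _ _ _ _ _ _ _ _ _ H

/-- The points `(k + m ω) / n` to be checked for discriminant `-19`. -/
def L19 : List (ℕ × ℕ × ℕ) :=
  [(0, 0, 1), (0, 1, 2), (1, 1, 2)]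

include hℓ hℓ5 in
lemma cert19 (F : GL (Fin 2) (Q (-5) 1) →* Multiplicative (ZMod ℓ))
    (hu : ∀ u : Q (-5) 1, IsUnit u → u ^ 12 = 1) :
    ∀ t ∈ L19, hz F t.1 t.2.1 t.2.2 0 = 0 := by
  have R := @relz _ hℓ hℓ5 _ _ F hu
  set h := hz F
  have e0 : h 1 0 0 0 = 0 := hv_unit hℓ hℓ5 F hu
  have e1 : h 0 0 1 0 = 0 := two_cancel hℓ hℓ5 <| by
    linear_combination R 0 0 (-1) 0 1 0 0 0 0 0 (-1) 0 1 0 0 0 1 0 0 (-1) 0 0 1 1 0 0 0 + e0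
  have e2 : h 2 0 1 (-1) = 0 := two_cancel hℓ hℓ5 <| by
    linear_combination R 2 0 0 1 1 (-1) 3 0 2 0 0 1 1 (-1) 3 0 1 0 (-1) (-1) 0 0 1 1 0 0 0 + e0
  have e3 : h 1 1 2 0 = 0 := by
    linear_combination R 0 0 (-1) 0 1 0 0 0 1 1 (-3) 1 2 0 0 1 1 0 (-1) (-1) 0 0 1 2 0 1 (-1) - e1 + e2
  have e4 : h 0 1 2 0 = 0 := by
    linear_combination R 0 1 (-3) 1 2 0 1 1 0 0 (-1) 0 1 0 0 0 1 0 (-1) 1 0 0 1 2 0 1 (-1) - e1 + e2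
  simp only [L19, List.forall_mem_cons]
  exact ⟨e1, e4, e3,
    by simp⟩

/-- The points `(k + m ω) / n` to be checked for discriminant `-43`. -/
def L43 : List (ℕ × ℕ × ℕ) :=
  [(0, 0, 1), (0, 1, 2), (1, 1, 2), (0, 1, 3), (1, 1, 3), (1, 2, 3)]

include hℓ hℓ5 in
lemma cert43 (F : GL (Fin 2) (Q (-11) 1) →* Multiplicative (ZMod ℓ))
    (hu : ∀ u : Q (-11) 1, IsUnit u → u ^ 12 = 1) :
    ∀ t ∈ L43, hz F t.1 t.2.1 t.2.2 0 = 0 := by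
  have R := @relz _ hℓ hℓ5 _ _ F hu
  set h := hz F
  have e0 : h 1 0 0 0 = 0 := hv_unit hℓ hℓ5 F hu
  have e1 : h 0 0 1 0 = 0 := by
    linear_combination R 0 0 (-1) 0 1 0 0 0 0 0 (-1) 0 1 0 0 0 1 (-1) 0 1 (-1) 0 (-1) 0 0 1 0
  have e2 : h 1 1 3 0 = 0 := two_cancel hℓ hℓ5 <| by
    linear_combination R 1 1 (-7) 2 3 0 2 2 1 1 (-7) 2 3 0 2 2 1 (-1) (-1) (-1) 0 0 1 1 0 0 0 + e0
  have e3 : h 0 1 2 0 = -h 1 1 2 0 := by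
    linear_combination R 0 1 (-6) 1 2 0 1 1 1 1 (-6) 1 2 0 0 1 1 (-1) (-1) (-1) 0 0 1 1 0 0 0 + e0
  have e4 : h 1 1 2 0 = 0 := three_cancel hℓ hℓ5 <| by
    linear_combination -R 0 1 (-6) 1 2 0 1 1 0 1 (-6) 1 2 0 1 1 1 (-1) (-1) 1 (-1) (-1) (-1) 1 1 2 0 + 2 * e3
  have e5 : h 0 1 3 0 = 0 := two_cancel hℓ hℓ5 <| by
    linear_combination R 0 1 (-4) 1 3 0 2 1 0 1 (-4) 1 3 0 2 1 (-1) (-1) 0 (-1) 0 0 (-1) 1 1 3 0 + e2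
  have e6 : h 1 2 3 0 = 0 := two_cancel hℓ hℓ5 <| by
    linear_combination R 1 2 (-15) 2 3 0 0 2 1 2 (-15) 2 3 0 0 2 (-1) 0 0 1 (-1) (-1) (-1) 1 1 3 0 + e2
  simp only [L43, List.forall_mem_cons]
  exact ⟨e1, (by linear_combination e3 - e4), e4, e5, e2, e6,
    by simp⟩

/-- The points `(k + m ω) / n` to be checked for discriminant `-67`. -/
def L67 : List (ℕ × ℕ × ℕ) :=
  [(0, 0, 1), (0, 1, 2), (1, 1, 2), (0, 1, 3), (1, 1, 3), (1, 2, 3), (0, 1, 4), (1, 1, 4),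
    (1, 3, 4), (2, 1, 4)]

include hℓ hℓ5 in
lemma cert67 (F : GL (Fin 2) (Q (-17) 1) →* Multiplicative (ZMod ℓ))
    (hu : ∀ u : Q (-17) 1, IsUnit u → u ^ 12 = 1) :
    ∀ t ∈ L67, hz F t.1 t.2.1 t.2.2 0 = 0 := by
  have R := @relz _ hℓ hℓ5 _ _ F hu
  set h := hz F
  have e0 : h 1 0 0 0 = 0 := hv_unit hℓ hℓ5 F hu
  have e1 : h 0 0 1 0 = 0 := by
    linear_combination R 0 0 (-1) 0 1 0 0 0 0 0 (-1) 0 1 0 0 0 1 (-1) 0 1 (-1) 0 (-1) 0 0 1 0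
  have e2 : h 1 1 3 0 = 0 := two_cancel hℓ hℓ5 <| by
    linear_combination R 1 1 (-11) 2 3 0 2 2 1 1 (-11) 2 3 0 2 2 1 (-1) (-1) (-1) 0 0 1 1 0 0 0 + e0
  have e3 : h 1 2 3 0 = 0 := two_cancel hℓ hℓ5 <| by
    linear_combination R 1 2 (-23) 2 3 0 0 2 1 2 (-23) 2 3 0 0 2 (-1) 0 0 1 (-1) (-1) (-1) 1 1 3 0 + e2
  have e4 : h 0 1 3 0 = 0 := two_cancel hℓ hℓ5 <| by
    linear_combination R 0 1 (-6) 1 3 0 2 1 0 1 (-6) 1 3 0 2 1 (-1) (-1) 0 (-1) 0 0 (-1) 1 1 3 0 + e2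
  have e5 : h 4 0 1 (-1) = 0 := two_cancel hℓ hℓ5 <| by
    linear_combination R 4 0 0 3 1 (-1) 13 0 4 0 0 3 1 (-1) 13 0 1 0 (-1) (-1) 0 0 1 1 0 0 0 + e0
  have e6 : h 0 1 4 0 = 0 := by
    linear_combination R 0 1 (-13) 1 4 0 1 3 0 0 (-1) 0 1 0 0 0 1 0 (-1) 1 0 0 1 4 0 1 (-1) - e1 + e5
  have e7 : h 0 1 2 0 = -h 1 1 2 0 := by
    linear_combination R 0 1 (-9) 1 2 0 1 1 1 1 (-9) 1 2 0 0 1 1 (-1) (-1) (-1) 0 0 1 1 0 0 0 + e0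
  have e8 : h 1 1 2 0 = 0 := three_cancel hℓ hℓ5 <| by
    linear_combination R 1 1 (-9) 1 2 0 0 1 1 1 (-9) 1 2 0 0 1 1 (-1) (-1) 1 (-1) (-1) (-1) 0 1 2 0 + e7
  have e9 : h 1 3 4 0 = 0 := by
    linear_combination R 1 3 (-13) 1 4 0 0 1 4 0 0 3 1 (-1) 13 0 (-1) 0 0 1 0 (-1) 1 0 0 1 0 - e5 + e1
  have e10 : h 1 1 4 0 = -h 2 1 4 0 := by
    linear_combination R 1 1 (-4) 1 4 0 2 1 2 1 (-4) 1 4 0 1 1 (-1) 0 0 (-1) 0 0 1 1 0 0 0 + e0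
  have e11 : h 2 1 4 0 = 0 := two_cancel hℓ hℓ5 <| by
    linear_combination R 2 1 (-4) 1 4 0 1 1 2 1 (-4) 1 4 0 1 1 (-1) 0 0 1 (-1) (-1) (-1) 1 3 4 0 + e9
  simp only [L67, List.forall_mem_cons]
  exact ⟨e1, (by linear_combination e7 - e8), e8, e4, e2, e3, e6, (by linear_combination e10 - e11),
    e9, e11,
    by simp⟩

/-- The points `(k + m ω) / n` to be checked for discriminant `-163`. -/
def L163 : List (ℕ × ℕ × ℕ) :=
  [(0, 0, 1), (0, 1, 2), (1, 1, 2), (0, 1, 3), (1, 1, 3), (1, 2, 3), (0, 1, 4), (1, 1, 4),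
    (1, 3, 4), (2, 1, 4), (0, 1, 5), (0, 2, 5), (1, 1, 5), (1, 2, 5), (1, 3, 5), (1, 4, 5),
    (2, 1, 5), (2, 2, 5), (2, 3, 5), (2, 4, 5), (0, 1, 6), (1, 1, 6), (1, 5, 6), (2, 1, 6),
    (2, 5, 6), (3, 1, 6), (0, 1, 7), (0, 2, 7), (0, 3, 7), (1, 1, 7), (1, 2, 7), (1, 3, 7),
    (1, 4, 7), (1, 5, 7), (1, 6, 7), (2, 1, 7), (2, 2, 7), (2, 3, 7), (2, 4, 7), (2, 5, 7),
    (2, 6, 7), (3, 1, 7), (3, 2, 7), (3, 3, 7), (3, 4, 7), (3, 5, 7), (3, 6, 7)]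

include hℓ hℓ5 in
lemma cert163 (F : GL (Fin 2) (Q (-41) 1) →* Multiplicative (ZMod ℓ))
    (hu : ∀ u : Q (-41) 1, IsUnit u → u ^ 12 = 1) :
    ∀ t ∈ L163, hz F t.1 t.2.1 t.2.2 0 = 0 := by
  have R := @relz _ hℓ hℓ5 _ _ F hu
  set h := hz F
  have e0 : h 1 0 0 0 = 0 := hv_unit hℓ hℓ5 F hu
  have e1 : h 0 0 1 0 = 0 := by
    linear_combination R 0 0 (-1) 0 1 0 0 0 0 0 (-1) 0 1 0 0 0 1 (-1) 0 1 (-1) 0 (-1) 0 0 1 0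
  have e2 : h 1 1 3 0 = 0 := two_cancel hℓ hℓ5 <| by
    linear_combination R 1 1 (-27) 2 3 0 2 2 1 1 (-27) 2 3 0 2 2 1 (-1) (-1) (-1) 0 0 1 1 0 0 0 + e0
  have e3 : h 1 2 3 0 = 0 := two_cancel hℓ hℓ5 <| by
    linear_combination R 1 2 (-55) 2 3 0 0 2 1 2 (-55) 2 3 0 0 2 (-1) 0 0 1 (-1) (-1) (-1) 1 1 3 0 + e2
  have e4 : h 0 1 3 0 = 0 := two_cancel hℓ hℓ5 <| by
    linear_combination R 0 1 (-14) 1 3 0 2 1 0 1 (-14) 1 3 0 2 1 (-1) (-1) 0 (-1) 0 0 (-1) 1 1 3 0 + e2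
  have e5 : h 2 3 7 0 = 0 := two_cancel hℓ hℓ5 <| by
    linear_combination R 2 3 (-69) 5 7 0 5 4 2 3 (-69) 5 7 0 5 4 1 (-1) (-1) (-1) 0 0 1 1 0 0 0 + e0
  have e6 : h 1 1 5 0 = -h 1 2 5 0 := by
    linear_combination R 1 1 (-24) 2 5 0 4 3 1 2 (-65) 4 5 0 4 4 1 (-1) (-1) (-1) 0 0 1 1 0 0 0 + e0
  have e7 : h 1 3 5 0 = -h 2 1 5 0 := by
    linear_combination R 1 3 (-98) 5 5 0 3 4 2 1 (-15) 2 5 0 4 2 1 (-1) (-1) (-1) 0 0 1 1 0 0 0 + e0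
  have e8 : h 0 1 2 0 = -h 1 1 2 0 := by
    linear_combination R 0 1 (-21) 1 2 0 1 1 1 1 (-21) 1 2 0 0 1 1 (-1) (-1) (-1) 0 0 1 1 0 0 0 + e0
  have e9 : h 1 1 2 0 = 0 := three_cancel hℓ hℓ5 <| by
    linear_combination -R 0 1 (-21) 1 2 0 1 1 0 1 (-21) 1 2 0 1 1 1 (-1) (-1) 1 (-1) (-1) (-1) 1 1 2 0 + 2 * e8
  have e10 : h 0 1 4 0 = -h 1 3 4 0 := by
    linear_combination R 0 1 (-31) 1 4 0 1 3 1 3 (-31) 1 4 0 0 1 (-1) 0 0 (-1) 0 0 1 1 0 0 0 + e0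
  have e11 : h 1 3 4 0 = 0 := three_cancel hℓ hℓ5 <| by
    linear_combination R 1 3 (-31) 1 4 0 0 1 1 3 (-31) 1 4 0 0 1 1 0 (-1) (-1) 0 1 1 0 1 4 0 + e10
  have e12 : h 2 1 4 0 = 0 := two_cancel hℓ hℓ5 <| by
    linear_combination R 2 1 (-10) 1 4 0 1 1 2 1 (-10) 1 4 0 1 1 (-1) 0 0 1 (-1) (-1) (-1) 1 3 4 0 + e11
  have e13 : h 1 1 4 0 = 0 := two_cancel hℓ hℓ5 <| by
    linear_combination R 1 1 (-10) 1 4 0 2 1 1 1 (-10) 1 4 0 2 1 (-1) 0 0 1 0 0 1 0 1 4 0 + e10 - e11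
  have e14 : h 0 2 5 0 = -h 2 3 5 0 := by
    linear_combination R 0 2 (-33) 2 5 0 3 2 2 3 (-74) 3 5 0 0 3 1 (-1) (-1) (-1) 0 0 1 1 0 0 0 + e0
  have e15 : h 2 2 5 0 = -h 2 4 5 0 := by
    linear_combination R 2 2 (-65) 4 5 0 2 4 2 4 (-65) 4 5 0 2 2 (-1) 0 0 (-1) 0 0 1 1 0 0 0 + e0
  have e16 : h 0 1 5 0 = -h 1 4 5 0 := by
    linear_combination R 0 1 (-33) 1 5 0 1 4 1 4 (-33) 1 5 0 0 1 (-1) 0 0 (-1) 0 0 1 1 0 0 0 + e0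
  have e17 : h 1 4 5 0 = 0 := three_cancel hℓ hℓ5 <| by
    linear_combination R 1 4 (-33) 1 5 0 0 1 1 4 (-33) 1 5 0 0 1 1 0 (-1) (-1) 0 1 1 0 1 5 0 + e16
  have e18 : h 2 1 6 0 = -h 3 1 6 0 := by
    linear_combination R 2 1 (-6) 1 6 0 3 1 3 1 (-6) 1 6 0 2 1 (-1) 0 0 (-1) 0 0 1 1 0 0 0 + e0
  have e19 : h 6 0 2 (-1) = -h 7 0 2 (-1) := by
    linear_combination R 6 0 5 5 2 (-1) 36 0 7 0 6 6 2 (-1) 37 0 1 (-1) (-1) (-1) 0 0 1 1 0 0 0 + e0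
  have e20 : h 7 0 2 (-1) = 0 := three_cancel hℓ hℓ5 <| by
    linear_combination R 7 0 6 6 2 (-1) 37 0 7 0 6 6 2 (-1) 37 0 1 (-1) (-1) 1 0 0 1 6 0 2 (-1) + e19
  have e21 : h 2 5 6 0 = 0 := by
    linear_combination R 2 5 (-34) 2 6 0 1 1 7 0 6 6 2 (-1) 37 0 (-1) 0 0 1 0 (-1) 1 0 0 1 0 - e20 + e1
  have e22 : h 2 6 7 0 = 0 := by
    linear_combination R 0 0 (-1) 0 1 0 0 0 2 6 (-35) 2 7 0 1 1 1 0 (-1) (-1) 0 0 1 7 0 2 (-1) - e1 + e20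
  have e23 : h 7 0 3 (-1) = -h 20 0 3 (-1) := by
    linear_combination R 7 0 1 4 3 (-1) 24 1 20 0 14 17 3 (-1) 37 1 1 (-1) (-1) (-1) 0 0 1 1 0 0 0 + e0
  have e24 : h 0 1 6 0 = -h 1 5 6 0 := by
    linear_combination R 0 1 (-7) 1 6 0 5 1 1 5 (-171) 5 6 0 0 5 1 (-1) (-1) (-1) 0 0 1 1 0 0 0 + e0
  have e25 : h 1 1 6 0 = 0 := by
    linear_combination R 6 0 5 5 2 (-1) 36 0 1 1 (-34) 2 6 0 2 5 1 (-1) (-1) 1 0 0 1 0 0 1 0 - e19 + e20 + e1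
  have e26 : h 3 2 7 0 = -h 3 3 7 0 := by
    linear_combination R 3 2 (-34) 3 7 0 3 3 3 3 (-34) 3 7 0 3 2 (-1) 0 0 (-1) 0 0 1 1 0 0 0 + e0
  have e27 : h 1 4 7 0 = -h 3 6 7 0 := by
    linear_combination R 1 4 (-23) 3 7 0 4 1 3 6 (-103) 9 7 0 6 3 1 (-1) (-1) (-1) 0 0 1 1 0 0 0 + e0
  have e28 : h 1 5 7 0 = -h 3 1 7 0 := by
    linear_combination R 1 5 (-29) 3 7 0 3 1 3 1 (-29) 3 7 0 1 5 (-1) 0 0 (-1) 0 0 1 1 0 0 0 + e0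
  have e29 : h 1 1 7 0 = 0 := by
    linear_combination R 7 0 6 6 2 (-1) 37 0 1 1 (-35) 2 7 0 2 6 1 (-1) (-1) 1 0 0 1 0 0 1 0 - e20 + e1
  have e30 : h 1 3 7 0 = -h 2 2 7 0 := by
    linear_combination R 1 3 (-35) 2 7 0 2 2 2 2 (-35) 2 7 0 1 3 (-1) 0 0 (-1) 0 0 1 1 0 0 0 + e0
  have e31 : h 1 5 6 0 = 0 := two_cancel hℓ hℓ5 <| by
    linear_combination R 1 5 (-171) 5 6 0 0 5 1 5 (-171) 5 6 0 0 5 (-1) 0 0 (-1) 0 0 (-1) 2 5 6 0 + e21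
  have e32 : h 3 1 6 0 = 0 := two_cancel hℓ hℓ5 <| by
    linear_combination R 3 1 (-6) 1 6 0 2 1 3 1 (-6) 1 6 0 2 1 (-1) 0 0 1 (-1) (-1) (-1) 2 5 6 0 + e21
  have e33 : h 0 2 7 0 = -h 3 4 7 0 := by
    linear_combination R 0 2 (-47) 2 7 0 3 4 3 4 (-47) 2 7 0 0 2 (-1) 0 0 (-1) 0 0 1 1 0 0 0 + e0
  have e34 : h 0 1 7 0 = -h 1 6 7 0 := by
    linear_combination R 0 1 (-6) 1 7 0 6 1 1 6 (-211) 6 7 0 0 6 1 (-1) (-1) (-1) 0 0 1 1 0 0 0 + e0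
  have e35 : h 2 1 7 0 = -h 2 4 7 0 := by
    linear_combination R 2 1 (-23) 2 7 0 2 4 2 4 (-23) 2 7 0 2 1 (-1) 0 0 (-1) 0 0 1 1 0 0 0 + e0
  have e36 : h 0 3 7 0 = -h 2 5 7 0 := by
    linear_combination R 0 3 (-88) 3 7 0 2 5 2 5 (-88) 3 7 0 0 3 (-1) 0 0 (-1) 0 0 1 1 0 0 0 + e0
  have e37 : h 10 0 3 (-1) = -h 14 0 3 (-1) := by
    linear_combination R 10 0 4 7 3 (-1) 30 1 14 0 8 11 3 (-1) 34 1 1 (-1) (-1) (-1) 0 0 1 1 0 0 0 + e0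
  have e38 : h 1 2 7 0 = -h 3 5 7 0 := by
    linear_combination R 1 2 (-23) 2 7 0 4 2 3 5 (-144) 10 7 0 6 5 1 (-1) (-1) (-1) 0 0 1 1 0 0 0 + e0
  have e39 : h (-26) 1 0 1 = 0 := by
    linear_combination R (-26) 1 (-37) (-18) 0 1 (-30) 1 1 3 (-31) 1 4 0 0 1 (-1) 0 0 1 0 0 1 1 2 3 0 - e11 + e3
  have e40 : h 17 0 1 (-1) = -h 2 3 5 0 := by
    linear_combination R 2 3 (-74) 3 5 0 0 3 17 0 0 12 1 (-1) 29 0 1 0 (-1) 1 0 0 1 1 2 3 0 + e3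
  have e41 : h 1 2 5 0 = -h 2 4 5 0 := by
    linear_combination R 2 4 (-65) 4 5 0 2 2 1 2 (-65) 4 5 0 4 4 (-1) 0 0 1 0 0 1 1 4 5 0 + e17
  have e42 : h 3 3 7 0 = h 18 0 2 (-1) := by
    linear_combination -R 18 0 5 5 2 (-1) 12 0 1 1 (-27) 2 3 0 2 2 (-1) 0 0 (-1) 0 0 (-1) 3 3 7 0 + e2
  have e43 : h 3 4 7 0 = h (-24) 1 0 1 := by
    linear_combination R 3 4 (-47) 2 7 0 0 2 0 1 (-31) 1 4 0 1 3 (-1) 0 0 1 0 0 1 (-24) 1 0 1 - e10 + e11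
  have e44 : h 2 4 7 0 = h (-23) 2 2 1 := by
    linear_combination R 2 4 (-23) 2 7 0 2 1 0 0 (-1) 0 1 0 0 0 1 0 0 1 0 0 1 (-23) 2 2 1 - e1
  have e45 : h (-27) 4 4 1 = -h 3 5 7 0 := by
    linear_combination R (-27) 4 (-129) (-15) 4 1 (-28) 4 3 5 (-144) 10 7 0 6 5 (-1) 0 0 1 (-1) (-1) (-1) 1 1 3 0 + e2
  have e46 : h 3 5 7 0 = 0 := two_cancel hℓ hℓ5 <| by
    linear_combination -R (-27) 4 (-129) (-15) 4 1 (-28) 4 1 3 (-31) 1 4 0 0 1 (-1) 0 0 1 0 0 1 3 5 7 0 + e45 + e11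
  have e47 : h 14 0 3 (-1) = -h 2 1 5 0 := by
    linear_combination R 14 0 8 11 3 (-1) 34 1 2 1 (-15) 2 5 0 4 2 1 (-1) (-1) 1 (-1) (-1) (-1) 1 2 3 0 + e3
  have e48 : h 3 6 7 0 = -h 20 0 3 (-1) := by
    linear_combination R 0 0 (-1) 0 1 0 0 0 3 6 (-103) 9 7 0 6 3 1 0 (-1) (-1) 0 0 1 7 0 3 (-1) - e1 + e23
  have e49 : h 1 6 7 0 = 0 := two_cancel hℓ hℓ5 <| by
    linear_combination R 1 6 (-211) 6 7 0 0 6 1 6 (-211) 6 7 0 0 6 (-1) 0 0 (-1) 0 0 (-1) 2 6 7 0 + e22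
  have e50 : h 2 2 7 0 = -h 18 0 2 (-1) := by
    linear_combination R 18 0 5 5 2 (-1) 12 0 2 2 (-35) 2 7 0 1 3 (-1) 0 0 1 (-1) (-1) (-1) 1 1 2 0 + e9
  have e51 : h (-24) 1 0 1 = h 2 3 5 0 := by
    linear_combination -R 2 3 (-74) 3 5 0 0 3 0 1 (-14) 1 3 0 2 1 1 0 (-1) (-1) 0 0 (-1) (-24) 1 0 1 + e4
  have e52 : h 16 0 4 (-1) = -h 2 4 5 0 := by
    linear_combination R 16 0 9 3 4 (-1) 10 0 2 4 (-65) 4 5 0 2 2 1 (-1) (-1) (-1) 1 0 (-1) 0 1 3 0 + e4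
  have e53 : h 18 0 2 (-1) = -h 2 4 5 0 := by
    linear_combination -R 2 2 (-65) 4 5 0 2 4 2 1 (-10) 1 4 0 1 1 1 (-1) (-1) (-1) 0 0 (-1) 18 0 2 (-1) + e15 + e12
  have e54 : h (-23) 2 2 1 = h 20 0 3 (-1) := by
    linear_combination -R 20 0 14 17 3 (-1) 37 1 7 0 6 6 2 (-1) 37 0 1 (-1) (-1) (-1) 1 1 1 2 4 7 0 + e20 - e44
  have e55 : h 2 1 5 0 = 0 := by
    linear_combination -R 14 0 8 11 3 (-1) 34 1 2 1 (-10) 1 4 0 1 1 1 (-1) (-1) (-1) 1 1 1 3 5 7 0 + e47 + e12 - e46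
  have e56 : h 2 5 7 0 = h 2 3 5 0 := by
    linear_combination R (-26) 1 (-37) (-18) 0 1 (-30) 1 2 5 (-88) 3 7 0 0 3 (-1) 0 0 (-1) 0 0 (-1) 2 3 5 0 - e39
  have e57 : h 2 3 5 0 = 0 := two_cancel hℓ hℓ5 <| by
    linear_combination -R 1 1 (-21) 1 2 0 0 1 17 0 0 12 1 (-1) 29 0 1 0 (-1) 1 (-1) (-1) (-1) 3 4 7 0 + e9 + e40 - e43 - e51
  have e58 : h 3 1 7 0 = h 2 4 5 0 := by
    linear_combination -R 1 5 (-29) 3 7 0 3 1 2 1 (-6) 1 6 0 3 1 (-1) 0 0 (-1) 1 1 1 16 0 4 (-1) + e28 + e18 - e32 - e52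
  have e59 : h 20 0 3 (-1) = 0 := by
    linear_combination -R 3 1 (-6) 1 6 0 2 1 7 0 1 4 3 (-1) 24 1 (-1) 0 0 1 0 0 1 2 1 5 0 + e32 + e23 - e55
  have e60 : h 2 4 5 0 = 0 := by
    linear_combination R 2 4 (-65) 4 5 0 2 2 (-24) 1 (-29) (-6) 0 1 (-12) 1 1 (-1) (-1) (-1) 1 1 1 10 0 3 (-1) - e51 - e57 + e37 - e47 + e55
  simp only [L163, List.forall_mem_cons]
  exact ⟨e1, (by linear_combination e8 - e9), e9, e4, e2, e3, (by linear_combination e10 - e11), e13,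
    e11, e12, (by linear_combination e16 - e17), (by linear_combination e14 - e57),
    (by linear_combination e6 - e41 + e60), (by linear_combination e41 - e60),
    (by linear_combination e7 - e55), e17, e55, (by linear_combination e15 - e60), e57, e60,
    (by linear_combination e24 - e31), e25, e31, (by linear_combination e18 - e32), e21, e32,
    (by linear_combination e34 - e49), (by linear_combination e33 - e43 - e51 - e57),
    (by linear_combination e36 - e56 - e57), e29, (by linear_combination e38 - e46),
    (by linear_combination e30 - e50 + e53 - e60), (by linear_combination e27 - e48 + e59),
    (by linear_combination e28 - e58 - e60), e49, (by linear_combination e35 - e44 - e54 - e59),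
    (by linear_combination e50 - e53 + e60), e5, (by linear_combination e44 + e54 + e59),
    (by linear_combination e56 + e57), e22, (by linear_combination e58 + e60),
    (by linear_combination e26 - e42 - e53 + e60), (by linear_combination e42 + e53 - e60),
    (by linear_combination e43 + e51 + e57), e46, (by linear_combination e48 - e59),
    by simp⟩


lemma q_re_one {A B : ℤ} : (1 : Q A B).re = 1 := rfl
lemma q_im_one {A B : ℤ} : (1 : Q A B).im = 0 := rfl

lemma gcd_emod {m n : ℤ} (h : Int.gcd m n = 1) : Int.gcd (m % n) n = 1 := by
  rw [← Int.isCoprime_iff_gcd_eq_one] at h ⊢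
  obtain ⟨a, b, hab⟩ := h
  exact ⟨a, b + a * (m / n), by linear_combination hab + a * Int.emod_add_mul_ediv m n⟩

lemma mod_sub {n k : ℕ} (h : k < n) :
    (((n - k) % n : ℕ) : ℤ) = n - k - n * ((n - k) / n : ℕ) := by
  have h1 := Nat.mod_add_div (n - k) n
  have h2 := congrArg (Nat.cast : ℕ → ℤ) h1
  rw [Nat.cast_add, Nat.cast_mul, Nat.cast_sub h.le] at h2
  linear_combination h2

include hℓ hℓ5 in
/-- From the finite list of vanishing values to all the discs of the covering. -/
lemma Z_all {A B : ℤ} (F : GL (Fin 2) (Q A B) →* Multiplicative (ZMod ℓ))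
    (hu : ∀ u : Q A B, IsUnit u → u ^ 12 = 1) (q : ℕ) (L : List (ℕ × ℕ × ℕ))
    (hL : ∀ t ∈ L, hz F t.1 t.2.1 t.2.2 0 = 0)
    (hinv : ∀ t ∈ L, ∃ x < t.2.2, ∃ y < t.2.2,
      ((t.2.2 : ℤ) ∣ ((⟨t.1, t.2.1⟩ : Q A B) * ⟨(x : ℕ), (y : ℕ)⟩).re - 1) ∧
      ((t.2.2 : ℤ) ∣ ((⟨t.1, t.2.1⟩ : Q A B) * ⟨(x : ℕ), (y : ℕ)⟩).im))
    (hchk : ∀ n ∈ List.range (q + 1), ∀ m ∈ List.range n, ∀ k ∈ List.range n, Nat.gcd m n ≠ 1 ∨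
      (k, m, n) ∈ L ∨ ((n - k) % n, (n - m) % n, n) ∈ L)
    (n : ℕ) (hn : 0 < n) (hnq : n ≤ q) (m k : ℤ) (hmn : Int.gcd m n = 1) :
    Z F ⟨k, m⟩ ⟨n, 0⟩ := by
  have key : ∀ t ∈ L, Z F ⟨t.1, t.2.1⟩ ⟨t.2.2, 0⟩ := by
    intro t ht
    obtain ⟨x, -, y, -, ⟨b₀, h₀⟩, ⟨b₁, h₁⟩⟩ := hinv t ht
    refine Z_of hℓ hℓ5 F hu _ _ ⟨b₀, b₁⟩ ⟨x, y⟩ ?_ (hL t ht)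
    simp only [QuadraticAlgebra.re_mul, QuadraticAlgebra.im_mul] at h₀ h₁
    ext
    · simp [q_re_one]
      linear_combination h₀
    · simp [q_im_one]
      linear_combination h₁
  have hn' : (0 : ℤ) < n := by exact_mod_cast hn
  have hm1 := Int.emod_nonneg m hn'.ne'
  have hm2 := Int.emod_lt_of_pos m hn'
  have hk1 := Int.emod_nonneg k hn'.ne'
  have hk2 := Int.emod_lt_of_pos k hn'
  obtain ⟨m', hm'⟩ := Int.eq_ofNat_of_zero_le hm1
  obtain ⟨k', hk'⟩ := Int.eq_ofNat_of_zero_le hk1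
  have em := Int.emod_add_mul_ediv m n
  have ek := Int.emod_add_mul_ediv k n
  have hg : Nat.gcd m' n = 1 := by
    have : Int.gcd (m % n) n = 1 := gcd_emod hmn
    rw [hm'] at this
    simpa using this
  rw [hm'] at em hm2
  rw [hk'] at ek hk2
  have hm2' : m' < n := by exact_mod_cast hm2
  have hk2' : k' < n := by exact_mod_cast hk2
  rcases (hchk n (List.mem_range.2 (by omega)) m' (List.mem_range.2 hm2') k'
    (List.mem_range.2 hk2')).resolve_left (not_not.2 hg) with h | h
  · refine Z_tr hℓ hℓ5 F hu 1 ⟨k / n, m / n⟩ _ _ _ (by ring) (key _ h) ?_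
    ext
    · simp
      linear_combination -ek
    · simp
      linear_combination -em
  · have e1 := mod_sub hk2'
    have e2 := mod_sub hm2'
    refine Z_tr hℓ hℓ5 F hu (-1) ⟨k / n + 1 - ((n - k') / n : ℕ), m / n + 1 - ((n - m') / n : ℕ)⟩
      _ _ _ (by ring) (key _ h) ?_
    ext
    · simp only [e1]
      simp
      linear_combination -ek
    · simp only [e2]
      simp
      linear_combination -em
end certificates

/-- The norm form. -/
def nrm {A B : ℤ} (z : Q A B) : ℤ := z.re ^ 2 + B * z.re * z.im - A * z.im ^ 2

lemma nrm_mul {A B : ℤ} (z w : Q A B) : nrm (z * w) = nrm z * nrm w := by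
  simp only [nrm, QuadraticAlgebra.re_mul, QuadraticAlgebra.im_mul]
  ring

lemma nrm_nonneg {A B : ℤ} (hAB : B ^ 2 + 4 * A < 0) (z : Q A B) : 0 ≤ nrm z := by
  have : 4 * nrm z = (2 * z.re + B * z.im) ^ 2 + -(B ^ 2 + 4 * A) * z.im ^ 2 := by
    simp only [nrm]; ring
  nlinarith [sq_nonneg (2 * z.re + B * z.im), mul_nonneg (neg_nonneg.mpr hAB.le) (sq_nonneg z.im)]

lemma nrm_pos {A B : ℤ} (hAB : B ^ 2 + 4 * A < 0) (z : Q A B) (hz : z ≠ 0) : 0 < nrm z := by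
  have h4 : 4 * nrm z = (2 * z.re + B * z.im) ^ 2 + -(B ^ 2 + 4 * A) * z.im ^ 2 := by
    simp only [nrm]; ring
  rcases eq_or_ne z.im 0 with h | h
  · have hr : z.re ≠ 0 := by
      intro h'
      apply hz
      ext <;> simp [h, h']
    have : 0 < z.re ^ 2 := by positivity
    simp only [nrm, h]
    linarith
  · have h1 : 0 < z.im ^ 2 := by positivity
    nlinarith [sq_nonneg (2 * z.re + B * z.im), mul_pos (neg_pos.mpr hAB) h1]

lemma nrm_unit {A B : ℤ} (hAB : B ^ 2 + 4 * A < 0) (u : Q A B) (hu : IsUnit u) : nrm u = 1 := by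
  obtain ⟨v, hv⟩ := hu.exists_right_inv
  have h := nrm_mul u v
  rw [hv] at h
  have h1 : nrm (1 : Q A B) = 1 := by simp [nrm, q_re_one, q_im_one]
  rw [h1] at h
  rcases Int.eq_one_or_neg_one_of_mul_eq_one h.symm with h | h
  · exact h
  · have := nrm_nonneg hAB u
    omega

lemma units_one {C : ℤ} (hC : 1 ≤ C) (u : Q (-C) 1) (hu : IsUnit u) : u ^ 12 = 1 := by
  have h := nrm_unit (by linarith) u hu
  obtain ⟨x, y⟩ := u
  simp only [nrm] at h
  have hy1 : y ≤ 1 := by nlinarith [sq_nonneg (2 * x + y)]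
  have hy2 : -1 ≤ y := by nlinarith [sq_nonneg (2 * x + y)]
  have hx1 : x ≤ 1 := by nlinarith [sq_nonneg (x + 2 * y), sq_nonneg y]
  have hx2 : -1 ≤ x := by nlinarith [sq_nonneg (x + 2 * y), sq_nonneg y]
  have h01 : (⟨1, 0⟩ : Q (-C) 1) = 1 := rfl
  have h02 : (⟨-1, 0⟩ : Q (-C) 1) = -1 := by ext <;> simp [q_re_one, q_im_one]
  interval_cases y <;> interval_cases x <;> first
    | (exfalso; linarith)
    | (rw [h01]; ring)
    | (rw [h02]; ring)
    | (obtain rfl : C = 1 := by linarith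
       decide)

lemma units_zero {C : ℤ} (hC : 1 ≤ C) (u : Q (-C) 0) (hu : IsUnit u) : u ^ 12 = 1 := by
  have h := nrm_unit (by linarith) u hu
  obtain ⟨x, y⟩ := u
  simp only [nrm] at h
  have hy1 : y ≤ 1 := by nlinarith [sq_nonneg x]
  have hy2 : -1 ≤ y := by nlinarith [sq_nonneg x]
  have hx1 : x ≤ 1 := by nlinarith [sq_nonneg y]
  have hx2 : -1 ≤ x := by nlinarith [sq_nonneg y]
  have h01 : (⟨1, 0⟩ : Q (-C) 0) = 1 := rfl
  have h02 : (⟨-1, 0⟩ : Q (-C) 0) = -1 := by ext <;> simp [q_re_one, q_im_one]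
  interval_cases y <;> interval_cases x <;> first
    | (exfalso; linarith)
    | (rw [h01]; ring)
    | (rw [h02]; ring)
    | (obtain rfl : C = 1 := by linarith
       decide)

/-- Dirichlet approximation gives the covering by discs with small integral denominator. -/
lemma covering {A B : ℤ} (hAB : B ^ 2 + 4 * A < 0) (q : ℕ) (hq : 0 < q)
    (hD : -(B ^ 2 + 4 * A) < 3 * (q + 1) ^ 2) (a c : Q A B) (hc : c ≠ 0) :
    ∃ (n : ℕ) (m k : ℤ), 0 < n ∧ n ≤ q ∧ Int.gcd m n = 1 ∧
      nrm (⟨n, 0⟩ * a - ⟨k, m⟩ * c) < nrm c := by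
  have hN := nrm_pos hAB c hc
  set N := nrm c with hNdef
  let cb : Q A B := ⟨c.re + B * c.im, -c.im⟩
  set X := (a * cb).re with hX
  set Y := (a * cb).im with hY
  have hNR : (0 : ℝ) < N := by exact_mod_cast hN
  obtain ⟨ρ, h1, h2⟩ := Real.exists_rat_abs_sub_le_and_den_le ((Y : ℝ) / N) hq
  have hρ : 0 < ρ.den := ρ.den_pos
  have hρR : (0 : ℝ) < ρ.den := by exact_mod_cast hρ
  set δ : ℤ := ρ.den * Y - ρ.num * N with hδ
  have hδ1 : |δ| * (q + 1) ≤ N := by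
    have e : ((Y : ℝ) / N - ρ) = δ / (N * ρ.den) := by
      have : (ρ : ℝ) = ρ.num / ρ.den := by exact_mod_cast (Rat.num_div_den ρ).symm
      rw [this, hδ]
      push_cast
      field_simp
    rw [e, abs_div, abs_of_pos (mul_pos hNR hρR), div_le_div_iff₀ (by positivity) (by positivity)]
      at h1
    have : |(δ : ℝ)| * (q + 1) ≤ N := by
      have h3 : (|(δ : ℝ)| * (q + 1)) * ρ.den ≤ N * ρ.den := by linarith
      exact le_of_mul_le_mul_right h3 hρR
    exact_mod_cast this
  -- choose the real coordinate
  obtain ⟨k, hk⟩ : ∃ k : ℤ, |2 * (ρ.den * X - k * N) + B * δ| ≤ N := by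
    set T := 2 * (ρ.den * X) + B * δ + N
    refine ⟨T / (2 * N), ?_⟩
    have t1 := Int.emod_add_mul_ediv T (2 * N)
    have t2 := Int.emod_nonneg T (by linarith : (2 * N) ≠ 0)
    have t3 := Int.emod_lt_of_pos T (by linarith : 0 < 2 * N)
    rw [abs_le]
    constructor <;> nlinarith
  refine ⟨ρ.den, ρ.num, k, hρ, h2, ?_, ?_⟩
  · have := ρ.reduced
    simpa [Int.gcd] using this
  · set W : Q A B := ⟨ρ.den, 0⟩ * a - ⟨k, ρ.num⟩ * c with hW
    have hcb : nrm cb = N := by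
      simp only [nrm, cb, hNdef]; ring
    have e : 4 * (nrm W * N) = (2 * (ρ.den * X - k * N) + B * δ) ^ 2
        + -(B ^ 2 + 4 * A) * δ ^ 2 := by
      rw [← hcb, ← nrm_mul, hδ, hX, hY, hcb, hNdef, hW]
      simp only [nrm, cb, QuadraticAlgebra.re_mul, QuadraticAlgebra.im_mul,
        QuadraticAlgebra.re_sub, QuadraticAlgebra.im_sub]
      ring
    have h5 : (2 * (ρ.den * X - k * N) + B * δ) ^ 2 ≤ N ^ 2 := sq_le_sq' (by linarith [abs_le.mp hk]) (abs_le.mp hk).2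
    have h6 : δ ^ 2 * (q + 1) ^ 2 ≤ N ^ 2 := by
      rw [← sq_abs δ, ← mul_pow]
      exact pow_le_pow_left₀ (by positivity) hδ1 2
    have h7 : -(B ^ 2 + 4 * A) * δ ^ 2 < 3 * N ^ 2 := by
      rcases eq_or_ne δ 0 with h | h
      · rw [h]
        nlinarith
      · have : 0 < δ ^ 2 := by positivity
        nlinarith
    nlinarith

/-- Triviality of the homomorphism over the concrete ring. -/
lemma triv_of {ℓ : ℕ} (hℓ : ℓ.Prime) (hℓ5 : 5 ≤ ℓ) {A B : ℤ} (hAB : B ^ 2 + 4 * A < 0)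
    (q : ℕ) (hq : 0 < q)
    (hD : -(B ^ 2 + 4 * A) < 3 * (q + 1) ^ 2)
    (F : GL (Fin 2) (Q A B) →* Multiplicative (ZMod ℓ))
    (hu : ∀ u : Q A B, IsUnit u → u ^ 12 = 1)
    (hZ : ∀ (n : ℕ), 0 < n → n ≤ q → ∀ m k : ℤ, Int.gcd m n = 1 → Z F ⟨k, m⟩ ⟨n, 0⟩)
    (M : GL (Fin 2) (Q A B)) : fv F M = 0 := by
  refine fv_zero hℓ hℓ5 F hu (fun z => (nrm z).toNat) ?_ M
  intro a c hc
  obtain ⟨n, m, k, h1, h2, h3, h4⟩ := covering hAB q hq hD a c hc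
  refine ⟨_, _, hZ n h1 h2 m k h3, ?_⟩
  have := nrm_nonneg hAB (⟨n, 0⟩ * a - ⟨k, m⟩ * c)
  have hN := nrm_pos hAB c hc
  omega

/-- The Euclidean cases. -/
lemma triv_euclid {ℓ : ℕ} (hℓ : ℓ.Prime) (hℓ5 : 5 ≤ ℓ) {A B : ℤ} (hAB : B ^ 2 + 4 * A < 0)
    (hD : -(B ^ 2 + 4 * A) < 12)
    (F : GL (Fin 2) (Q A B) →* Multiplicative (ZMod ℓ))
    (hu : ∀ u : Q A B, IsUnit u → u ^ 12 = 1) (M : GL (Fin 2) (Q A B)) : fv F M = 0 := by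
  refine triv_of hℓ hℓ5 hAB 1 one_pos (by norm_num; linarith) F hu ?_ M
  intro n h1 h2 m k _
  obtain rfl : n = 1 := by omega
  have e1 : ∀ x : Q A B, hv F 0 1 + hv F 0 1 = hv F 1 0 := fun x =>
    rel hℓ hℓ5 F hu 1 (-1) 1 0 (-1) 1 0 0 (-1) 1 0 0 0 1 0 (by norm_num)
  have e2 : hv F 0 1 = 0 := two_cancel hℓ hℓ5
    (by linear_combination e1 0 + hv_unit hℓ hℓ5 F hu)
  refine Z_tr hℓ hℓ5 F hu 1 ⟨k, m⟩ 0 _ _ (by ring)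
    (Z_of hℓ hℓ5 F hu 0 1 (-1) 0 (by ring) e2) ?_
  ext <;> simp

section final
variable {ℓ : ℕ} (hℓ : ℓ.Prime) (hℓ5 : 5 ≤ ℓ)
include hℓ hℓ5

lemma triv19 (F : GL (Fin 2) (Q (-5) 1) →* Multiplicative (ZMod ℓ))
    (M : GL (Fin 2) (Q (-5) 1)) : fv F M = 0 :=
  have hu := units_one (C := 5) (by norm_num)
  triv_of hℓ hℓ5 (by norm_num) 2 (by norm_num) (by norm_num) F hu
    (Z_all hℓ hℓ5 F hu 2 L19 (cert19 hℓ hℓ5 F hu) (by decide +kernel) (by decide +kernel)) M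

lemma triv43 (F : GL (Fin 2) (Q (-11) 1) →* Multiplicative (ZMod ℓ))
    (M : GL (Fin 2) (Q (-11) 1)) : fv F M = 0 :=
  have hu := units_one (C := 11) (by norm_num)
  triv_of hℓ hℓ5 (by norm_num) 3 (by norm_num) (by norm_num) F hu
    (Z_all hℓ hℓ5 F hu 3 L43 (cert43 hℓ hℓ5 F hu) (by decide +kernel) (by decide +kernel)) M

lemma triv67 (F : GL (Fin 2) (Q (-17) 1) →* Multiplicative (ZMod ℓ))
    (M : GL (Fin 2) (Q (-17) 1)) : fv F M = 0 :=
  have hu := units_one (C := 17) (by norm_num)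
  triv_of hℓ hℓ5 (by norm_num) 4 (by norm_num) (by norm_num) F hu
    (Z_all hℓ hℓ5 F hu 4 L67 (cert67 hℓ hℓ5 F hu) (by decide +kernel) (by decide +kernel)) M

lemma triv163 (F : GL (Fin 2) (Q (-41) 1) →* Multiplicative (ZMod ℓ))
    (M : GL (Fin 2) (Q (-41) 1)) : fv F M = 0 :=
  have hu := units_one (C := 41) (by norm_num)
  triv_of hℓ hℓ5 (by norm_num) 7 (by norm_num) (by norm_num) F hu
    (Z_all hℓ hℓ5 F hu 7 L163 (cert163 hℓ hℓ5 F hu) (by decide +kernel) (by decide +kernel)) M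
end final

section numberfield

lemma equivOf {S : Type} [CommRing S] [CharZero S] {A B : ℤ}
    (hAB : B ^ 2 + 4 * A < 0) (w : S) (hw : w * w = A + B * w)
    (hall : ∀ z : S, ∃ x y : ℤ, z = x + y * w) : Nonempty (Q A B ≃+* S) := by
  let φ : Q A B →+* S :=
    { toFun := fun z => z.re + z.im * w
      map_one' := by rw [q_re_one, q_im_one]; simp
      map_zero' := by simp
      map_add' := fun x y => by simp; ring
      map_mul' := fun x y => by
        simp only [QuadraticAlgebra.re_mul, QuadraticAlgebra.im_mul]
        push_cast
        linear_combination (-(x.im : S) * y.im) * hw }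
  have hφ : ∀ z, φ z = z.re + z.im * w := fun z => rfl
  refine ⟨RingEquiv.ofBijective φ ⟨?_, ?_⟩⟩
  · rw [injective_iff_map_eq_zero]
    intro z hz
    by_contra hne
    have h1 : φ (z * ⟨z.re + B * z.im, -z.im⟩) = 0 := by rw [map_mul, hz, zero_mul]
    have h2 : φ (z * ⟨z.re + B * z.im, -z.im⟩) = (nrm z : ℤ) := by
      rw [hφ]
      simp only [QuadraticAlgebra.re_mul, QuadraticAlgebra.im_mul, nrm]
      push_cast
      ring
    rw [h1] at h2
    have h3 : nrm z = 0 := by exact_mod_cast h2.symm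
    exact (nrm_pos hAB z hne).ne' h3
  · intro z
    obtain ⟨x, y, h⟩ := hall z
    exact ⟨⟨x, y⟩, h.symm⟩

lemma rat_int_of_sq {x : ℚ} {M : ℤ} (h : x ^ 2 = M) : ∃ t : ℤ, x = t := by
  have : IsIntegral ℤ x := by
    refine IsIntegral.of_pow (n := 2) (by norm_num) ?_
    rw [h]
    exact isIntegral_algebraMap (R := ℤ) (A := ℚ)
  obtain ⟨t, ht⟩ := IsIntegrallyClosed.isIntegral_iff.mp this
  exact ⟨t, by simpa using ht.symm⟩

lemma rat_int_of {d : ℕ} (hd : Squarefree d) {x : ℚ} {M : ℤ} (h : d * x ^ 2 = M) :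
    ∃ t : ℤ, x = t := by
  have hd0 : (d : ℚ) ≠ 0 := by exact_mod_cast hd.ne_zero
  obtain ⟨t, ht⟩ := rat_int_of_sq (x := d * x) (M := d * M) (by push_cast; rw [← h]; ring)
  have h1 : (d : ℤ) ∣ t ^ 2 := by
    refine ⟨M, ?_⟩
    have : (t : ℚ) ^ 2 = d * M := by rw [← ht, ← h]; ring
    exact_mod_cast this
  have hd' : Squarefree (d : ℤ) := by
    rw [← Int.squarefree_natAbs]; simpa using hd
  obtain ⟨r, hr⟩ := (hd'.dvd_pow_iff_dvd (by norm_num)).mp h1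
  refine ⟨r, ?_⟩
  rw [hr] at ht
  push_cast at ht
  exact mul_left_cancel₀ hd0 ht

variable {K : Type} [Field K] [NumberField K]

lemma coords {d : ℕ} (hd : Squarefree d) (s : K) (hs : s ^ 2 = -(d : K))
    (hK : Module.finrank ℚ K = 2) (z : K) (hz : IsIntegral ℤ z) :
    ∃ P R N : ℤ, 2 * z = P + R * s ∧ P ^ 2 + d * R ^ 2 = 4 * N := by
  have hd0 : (0 : ℚ) < d := by exact_mod_cast Nat.pos_of_ne_zero hd.ne_zero
  let φ : QuadraticAlgebra ℚ (-(d : ℚ)) 0 →ₐ[ℚ] K :=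
    QuadraticAlgebra.lift ⟨s, by
      rw [← pow_two, hs]
      simp [Algebra.smul_def]⟩
  have hφ : ∀ z, φ z = (z.re : K) + z.im * s := by
    intro z
    simp [φ, QuadraticAlgebra.lift, Algebra.smul_def]
  have hinj : Function.Injective φ := by
    rw [injective_iff_map_eq_zero]
    intro a ha
    rw [hφ] at ha
    have h1 : (a.re : K) ^ 2 + d * (a.im : K) ^ 2 = 0 := by
      linear_combination ((a.re : K) - a.im * s) * ha + (a.im : K) ^ 2 * hs
    have h2 : a.re ^ 2 + d * a.im ^ 2 = 0 := by exact_mod_cast h1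
    have h3 : a.im ^ 2 = 0 := by nlinarith [sq_nonneg a.re, sq_nonneg a.im]
    have h4 : a.re ^ 2 = 0 := by rw [h3] at h2; linarith
    ext
    · simpa using h4
    · simpa using h3
  have hfin : Module.finrank ℚ (QuadraticAlgebra ℚ (-(d : ℚ)) 0) = Module.finrank ℚ K := by
    rw [hK, QuadraticAlgebra.finrank_eq_two]
  have hbij : Function.Bijective φ := by
    refine ⟨hinj, ?_⟩
    exact (LinearMap.injective_iff_surjective_of_finrank_eq_finrank (f := φ.toLinearMap) hfin).mp
      hinj
  let e := RingEquiv.ofBijective φ hbij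
  have he : ∀ z, e z = (z.re : K) + z.im * s := hφ
  let c : K →+* K := (e : _ →+* K).comp
    ((starRingEnd (QuadraticAlgebra ℚ (-(d : ℚ)) 0)).comp (e.symm : K →+* _))
  obtain ⟨⟨p, q⟩, rfl⟩ := e.surjective z
  have hc : c (e ⟨p, q⟩) = (p : K) - q * s := by
    have h : c (e ⟨p, q⟩) = e (star ⟨p, q⟩) :=
      congrArg (fun t => e (star t)) (e.symm_apply_apply _)
    rw [h, he]
    simp
    ring
  have hci : IsIntegral ℤ ((p : K) - q * s) := hc ▸ map_isIntegral_int c hz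
  rw [he] at hz ⊢
  simp only at hz ⊢
  have int_of : ∀ x : ℚ, IsIntegral ℤ (x : K) → ∃ t : ℤ, x = t := by
    intro x hx
    have h : IsIntegral ℤ x := by
      rw [← isIntegral_algebraMap_iff (R := ℤ) (A := ℚ) (B := K) (algebraMap ℚ K).injective]
      simpa using hx
    obtain ⟨t, ht⟩ := IsIntegrallyClosed.isIntegral_iff.mp h
    exact ⟨t, by simpa using ht.symm⟩
  obtain ⟨P, hP⟩ := int_of (2 * p) (by
    have h := hz.add hci
    have h' : ((2 * p : ℚ) : K) = p + q * s + (p - q * s) := by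
      push_cast
      ring
    rw [h']
    exact h)
  obtain ⟨N, hN⟩ := int_of (p ^ 2 + d * q ^ 2) (by
    have h := hz.mul hci
    have h' : ((p ^ 2 + d * q ^ 2 : ℚ) : K) = (p + q * s) * (p - q * s) := by
      push_cast
      linear_combination ((q : K) ^ 2) * hs
    rw [h']
    exact h)
  obtain ⟨R, hR⟩ := rat_int_of hd (x := 2 * q) (M := 4 * N - P ^ 2) (by
    push_cast
    rw [← hP, ← hN]
    ring)
  refine ⟨P, R, N, ?_, ?_⟩
  · have hP' : ((2 * p : ℚ) : K) = ((P : ℚ) : K) := by rw [hP]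
    have hR' : ((2 * q : ℚ) : K) = ((R : ℚ) : K) := by rw [hR]
    push_cast at hP' hR'
    linear_combination hP' + s * hR'
  · have : (P : ℚ) ^ 2 + d * (R : ℚ) ^ 2 = 4 * N := by
      rw [← hP, ← hR, ← hN]
      ring
    exact_mod_cast this

lemma ringEquiv_one {d : ℕ} (hd : Squarefree d) (C : ℕ) (hC : d + 1 = 4 * C) (s : K)
    (hs : s ^ 2 = -(d : K)) (hK : Module.finrank ℚ K = 2) :
    Nonempty (Q (-(C : ℤ)) 1 ≃+* 𝓞 K) := by
  have hC' : (d : K) + 1 = 4 * C := by exact_mod_cast hC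
  have hw : ((1 + s) / 2) * ((1 + s) / 2) = -(C : K) + (1 + s) / 2 := by
    field_simp
    linear_combination hs - hC'
  have hwi : IsIntegral ℤ ((1 + s) / 2) := by
    refine ⟨Polynomial.X ^ 2 - Polynomial.X + Polynomial.C (C : ℤ), ?_, ?_⟩
    · monicity!
    · simp
      linear_combination hw
  let w : 𝓞 K := ⟨(1 + s) / 2, hwi⟩
  have hwK : algebraMap (𝓞 K) K w = (1 + s) / 2 := rfl
  refine equivOf (by omega) w ?_ ?_
  · apply FaithfulSMul.algebraMap_injective (𝓞 K) K
    simp only [map_add, map_mul, map_intCast, hwK]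
    push_cast
    linear_combination hw
  · intro z
    obtain ⟨P, R, N, h1, h2⟩ := coords hd s hs hK z z.isIntegral_coe
    have hpar : (2 : ℤ) ∣ P - R := by
      have h3 : (P - R) * (P - R) = 2 * (2 * N - 2 * C * R ^ 2 + R ^ 2 - P * R) := by
        have : (d : ℤ) = 4 * C - 1 := by omega
        rw [this] at h2
        linear_combination h2
      rcases Int.prime_two.dvd_or_dvd (Dvd.intro _ h3.symm) with h | h <;> exact h
    obtain ⟨x, hx⟩ := hpar
    refine ⟨x, R, ?_⟩
    apply FaithfulSMul.algebraMap_injective (𝓞 K) K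
    have hx' : (P : K) - R = 2 * x := by exact_mod_cast hx
    simp only [map_add, map_mul, map_intCast, hwK]
    push_cast
    have : (2 : K) ≠ 0 := two_ne_zero
    apply mul_left_cancel₀ this
    field_simp
    linear_combination h1 + hx'

lemma ringEquiv_zero {d : ℕ} (hd : Squarefree d) (hd' : d = 1 ∨ d = 2) (s : K)
    (hs : s ^ 2 = -(d : K)) (hK : Module.finrank ℚ K = 2) :
    Nonempty (Q (-(d : ℤ)) 0 ≃+* 𝓞 K) := by
  have hwi : IsIntegral ℤ s := by
    refine IsIntegral.of_pow (n := 2) (by norm_num) ?_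
    rw [hs]
    have := isIntegral_algebraMap (R := ℤ) (A := K) (x := -(d : ℤ))
    simpa using this
  let w : 𝓞 K := ⟨s, hwi⟩
  have hwK : algebraMap (𝓞 K) K w = s := rfl
  refine equivOf (by rcases hd' with rfl | rfl <;> norm_num) w ?_ ?_
  · apply FaithfulSMul.algebraMap_injective (𝓞 K) K
    simp only [map_add, map_mul, map_intCast, hwK]
    push_cast
    linear_combination hs
  · intro z
    obtain ⟨P, R, N, h1, h2⟩ := coords hd s hs hK z z.isIntegral_coe
    have hpar : (∃ x, P = 2 * x) ∧ ∃ y, R = 2 * y := by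
      rcases Int.even_or_odd' P with ⟨x, hx | hx⟩ <;> rcases Int.even_or_odd' R with ⟨y, hy | hy⟩
      · exact ⟨⟨x, hx⟩, ⟨y, hy⟩⟩
      all_goals
        exfalso
        subst hx hy
        ring_nf at h2
        rcases hd' with rfl | rfl <;> push_cast at h2 <;> omega
    obtain ⟨⟨x, hx⟩, ⟨y, hy⟩⟩ := hpar
    refine ⟨x, y, ?_⟩
    apply FaithfulSMul.algebraMap_injective (𝓞 K) K
    simp only [map_add, map_mul, map_intCast, hwK]
    push_cast
    have : (2 : K) ≠ 0 := two_ne_zero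
    apply mul_left_cancel₀ this
    subst hx hy
    push_cast at h1
    linear_combination h1

end numberfield

lemma final_of {R S : Type} [CommRing R] [CommRing S] {ℓ : ℕ} (e : R ≃+* S)
    (h : ∀ (F : GL (Fin 2) R →* Multiplicative (ZMod ℓ)) (M : GL (Fin 2) R), fv F M = 0)
    (f : (GL (Fin 2) S ⧸ Subgroup.center (GL (Fin 2) S)) →* Multiplicative (ZMod ℓ)) :
    f = 1 := by
  ext M
  let φ := Matrix.GeneralLinearGroup.map (n := Fin 2) (e : R →+* S)
  let ψ := Matrix.GeneralLinearGroup.map (n := Fin 2) (e.symm : S →+* R)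
  have hM : φ (ψ M) = M := by
    ext i j
    simp [φ, ψ]
  have := h ((f.comp (QuotientGroup.mk' _)).comp φ) (ψ M)
  simp only [fv, MonoidHom.comp_apply, hM] at this
  simpa using this

theorem main (d : ℕ) (hd : d ∈ ({1, 2, 3, 7, 11, 19, 43, 67, 163} : Finset ℕ))
    (K : Type) [Field K] [NumberField K]
    (s : K) (hs : s ^ 2 = -(d : K)) (hK : Module.finrank ℚ K = 2)
    (ℓ : ℕ) (hℓ : ℓ.Prime) (hℓ5 : 5 ≤ ℓ)
    (f : (GL (Fin 2) (𝓞 K) ⧸ Subgroup.center (GL (Fin 2) (𝓞 K))) →*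
      Multiplicative (ZMod ℓ)) :
    f = 1 := by
  simp only [Finset.mem_insert, Finset.mem_singleton] at hd
  rcases hd with rfl | rfl | rfl | rfl | rfl | rfl | rfl | rfl | rfl
  · obtain ⟨e⟩ := ringEquiv_zero (by norm_num) (by norm_num) s hs hK
    exact final_of e (fun F M => triv_euclid hℓ hℓ5 (by norm_num) (by norm_num) F
      (units_zero (by norm_num)) M) f
  · obtain ⟨e⟩ := ringEquiv_zero Nat.prime_two.prime.squarefree (by norm_num) s hs hK
    exact final_of e (fun F M => triv_euclid hℓ hℓ5 (by norm_num) (by norm_num) F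
      (units_zero (by norm_num)) M) f
  · obtain ⟨e⟩ := ringEquiv_one Nat.prime_three.prime.squarefree 1 (by norm_num) s hs hK
    exact final_of e (fun F M => triv_euclid hℓ hℓ5 (by norm_num) (by norm_num) F
      (units_one (by norm_num)) M) f
  · obtain ⟨e⟩ := ringEquiv_one (by norm_num : Nat.Prime 7).prime.squarefree 2 (by norm_num) s hs hK
    exact final_of e (fun F M => triv_euclid hℓ hℓ5 (by norm_num) (by norm_num) F
      (units_one (by norm_num)) M) f
  · obtain ⟨e⟩ := ringEquiv_one (by norm_num : Nat.Prime 11).prime.squarefree 3 (by norm_num) s hs hK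
    exact final_of e (fun F M => triv_euclid hℓ hℓ5 (by norm_num) (by norm_num) F
      (units_one (by norm_num)) M) f
  · obtain ⟨e⟩ := ringEquiv_one (by norm_num : Nat.Prime 19).prime.squarefree 5 (by norm_num) s hs hK
    exact final_of e (triv19 hℓ hℓ5) f
  · obtain ⟨e⟩ := ringEquiv_one (by norm_num : Nat.Prime 43).prime.squarefree 11 (by norm_num) s hs hK
    exact final_of e (triv43 hℓ hℓ5) f
  · obtain ⟨e⟩ := ringEquiv_one (by norm_num : Nat.Prime 67).prime.squarefree 17 (by norm_num) s hs hK
    exact final_of e (triv67 hℓ hℓ5) f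
  · obtain ⟨e⟩ := ringEquiv_one (by norm_num : Nat.Prime 163).prime.squarefree 41 (by norm_num) s hs hK
    exact final_of e (triv163 hℓ hℓ5) f
end PGLProof

/-- Let `K = ℚ(√-d)` be one of the nine imaginary quadratic fields of class number one, with
ring of integers `O_K`.  For every prime `ℓ ≥ 5`, every group homomorphism from
`PGL₂(O_K) = GL₂(O_K)/center` to the additive group `ℤ/ℓℤ` is trivial, i.e.
`H¹(PGL₂(O_K), 𝔽_ℓ) = 0`. -/
theorem pgl2_hom_to_zmod_trivial
    (d : ℕ) (hd : d ∈ ({1, 2, 3, 7, 11, 19, 43, 67, 163} : Finset ℕ))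
    (K : Type) [Field K] [NumberField K]
    (s : K) (hs : s ^ 2 = -(d : K)) (hK : Module.finrank ℚ K = 2)
    (ℓ : ℕ) (hℓ : ℓ.Prime) (hℓ5 : 5 ≤ ℓ)
    (f : (GL (Fin 2) (𝓞 K) ⧸ Subgroup.center (GL (Fin 2) (𝓞 K))) →*
      Multiplicative (ZMod ℓ)) :
    f = 1 := by
  exact PGLProof.main d hd K s hs hK ℓ hℓ hℓ5 f
end

section
/- In the polynomial ring ℤ[a₁, a₃] in two variables, let Δ = a₃³(a₁³ − 27a₃) and c₆ = −a₁⁶ + 36a₁³a₃ − 216a₃² (the discriminant and c₆-invariant of the Weierstrass curve y² + a₁xy + a₃y = x³). Then the ideal of ℤ[a₁, a₃] generated by c₆ and Δ contains both a₁¹⁵ and 27a₃⁵. -/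
/-- In `ℤ[a₁, a₃]`, the ideal generated by the invariant
`c₆ = -a₁⁶ + 36a₁³a₃ - 216a₃²` and the discriminant `Δ = a₃³(a₁³ - 27a₃)` of the Weierstrass
curve `y² + a₁xy + a₃y = x³` contains both `a₁¹⁵` and `27a₃⁵`. -/
theorem three_torsion_discriminant_c6_ideal_membership
    (a₁ a₃ : MvPolynomial (Fin 2) ℤ)
    (ha₁ : a₁ = MvPolynomial.X 0) (ha₃ : a₃ = MvPolynomial.X 1) :
    a₁ ^ 15 ∈ Ideal.span ({-a₁ ^ 6 + 36 * a₁ ^ 3 * a₃ - 216 * a₃ ^ 2,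
        a₃ ^ 3 * (a₁ ^ 3 - 27 * a₃)} : Set (MvPolynomial (Fin 2) ℤ)) ∧
    27 * a₃ ^ 5 ∈ Ideal.span ({-a₁ ^ 6 + 36 * a₁ ^ 3 * a₃ - 216 * a₃ ^ 2,
        a₃ ^ 3 * (a₁ ^ 3 - 27 * a₃)} : Set (MvPolynomial (Fin 2) ℤ)) := by
  rw [Ideal.mem_span_pair, Ideal.mem_span_pair]
  refine ⟨⟨-(a₁ ^ 9 + 36 * a₁ ^ 6 * a₃ + 1080 * a₁ ^ 3 * a₃ ^ 2 + 31104 * a₃ ^ 3)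
      + 637632 * a₃ ^ 3, 886464 * a₃ + 637632 * (a₁ ^ 3 - 9 * a₃), ?_⟩,
    ⟨a₃ ^ 3, a₁ ^ 3 - 9 * a₃, ?_⟩⟩
  · ring
  · ring
end

section
/- Let d ∈ {1, 2, 3, 7, 11, 19, 43, 67, 163}, K = ℚ(√−d) with ring of integers O_K, and let ε be a generator of the unit group O_K^× (so ε = √−1 for d = 1, ε = (1+√−3)/2 for d = 3, and ε = −1 otherwise). Then there is no x ∈ O_K with x² ≡ ε (mod 4), i.e. ε is not congruent to a square modulo 4 in O_K. -/
open NumberField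

lemma aux_int (r : ℚ) (K : Type) [Field K] [NumberField K] (h : IsIntegral ℤ (algebraMap ℚ K r)) :
    ∃ m : ℤ, r = m := by
  have h2 : IsIntegral ℤ r := (isIntegral_algebraMap_iff (algebraMap ℚ K).injective).1 h
  obtain ⟨m, hm⟩ := IsIntegrallyClosed.isIntegral_iff.1 h2
  exact ⟨m, by simpa using hm.symm⟩

lemma aux_rat_ne (d : ℕ) (hd : 0 < d) (r : ℚ) : r ^ 2 ≠ -(d : ℚ) := by
  have : (0 : ℚ) < d := by exact_mod_cast hd
  nlinarith [sq_nonneg r]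

lemma aux_trace (d : ℕ) (hd : 0 < d) (K : Type) [Field K] [NumberField K]
    (s : K) (hs : s ^ 2 = -(d : K)) : Algebra.trace ℚ K s = 0 := by
  have hm : minpoly ℚ s = Polynomial.X ^ 2 - Polynomial.C (-(d : ℚ)) := by
    symm
    apply minpoly.eq_of_irreducible_of_monic
    · refine (X_pow_sub_C_irreducible_iff_of_prime Nat.prime_two).2 ?_
      intro b
      exact aux_rat_ne d hd b
    · simp [hs]
    · exact Polynomial.monic_X_pow_sub_C _ (by norm_num)
  rw [trace_eq_finrank_mul_minpoly_nextCoeff, hm]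
  have : (Polynomial.X ^ 2 - Polynomial.C (-(d : ℚ))).nextCoeff = 0 := by
    rw [Polynomial.nextCoeff, Polynomial.natDegree_X_pow_sub_C]
    simp [Polynomial.coeff_X, Polynomial.coeff_C]
  rw [this]; simp

lemma aux_li (d : ℕ) (hd : 0 < d) (K : Type) [Field K] [NumberField K]
    (s : K) (hs : s ^ 2 = -(d : K)) (p q : ℚ)
    (h : algebraMap ℚ K p + algebraMap ℚ K q * s = 0) : p = 0 ∧ q = 0 := by
  have hq : q = 0 := by
    by_contra hq
    have hq' : algebraMap ℚ K q ≠ 0 := by simpa using hq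
    have h1 : s = algebraMap ℚ K (-p / q) := by
      rw [map_div₀, map_neg]; field_simp; linear_combination h
    apply aux_rat_ne d hd (-p / q)
    apply (algebraMap ℚ K).injective
    rw [map_pow, ← h1, hs]; simp
  subst hq
  simpa using h

lemma aux_span (d : ℕ) (hd : 0 < d) (K : Type) [Field K] [NumberField K]
    (s : K) (hs : s ^ 2 = -(d : K)) (hK : Module.finrank ℚ K = 2) (x : K) :
    ∃ p q : ℚ, x = algebraMap ℚ K p + algebraMap ℚ K q * s := by
  have li : LinearIndependent ℚ ![(1 : K), s] := by
    rw [LinearIndependent.pair_iff]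
    intro p q h
    exact aux_li d hd K s hs p q (by simpa [Algebra.smul_def] using h)
  have := li.span_eq_top_of_card_eq_finrank (by simp [hK])
  have hx : x ∈ Submodule.span ℚ (Set.range ![(1 : K), s]) := by rw [this]; trivial
  simp only [Matrix.range_cons, Matrix.range_empty, Set.union_empty, Set.singleton_union] at hx
  obtain ⟨p, q, h⟩ := Submodule.mem_span_pair.1 hx
  exact ⟨p, q, by rw [← h]; simp [Algebra.smul_def]⟩

lemma aux_coord (d : ℕ) (hd : 0 < d) (hp : d = 1 ∨ d.Prime) (K : Type) [Field K] [NumberField K]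
    (s : K) (hs : s ^ 2 = -(d : K)) (hK : Module.finrank ℚ K = 2) (x : 𝓞 K) :
    ∃ t c : ℤ, 2 * (x : K) = t + c * s ∧ (4 : ℤ) ∣ t ^ 2 + d * c ^ 2 := by
  obtain ⟨p, q, h⟩ := aux_span d hd K s hs hK x
  have hxi : IsIntegral ℤ (x : K) := x.isIntegral_coe
  have htr : Algebra.trace ℚ K (x : K) = 2 * p := by
    rw [h, map_add, Algebra.trace_algebraMap, ← Algebra.smul_def, map_smul,
      aux_trace d hd K s hs, hK]
    simp
  obtain ⟨t, ht⟩ : ∃ t : ℤ, 2 * p = t := by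
    have h1 : IsIntegral ℤ (Algebra.trace ℚ K (x : K)) := Algebra.isIntegral_trace hxi
    rw [htr] at h1
    exact aux_int _ K (h1.map (IsScalarTower.toAlgHom ℤ ℚ K))
  have htK : 2 * algebraMap ℚ K p = t := by
    have := congrArg (algebraMap ℚ K) ht
    simpa using this
  obtain ⟨n, hn⟩ : ∃ n : ℤ, p ^ 2 + d * q ^ 2 = n := by
    apply aux_int _ K
    have : algebraMap ℚ K (p ^ 2 + d * q ^ 2) = t * (x : K) - x * x := by
      rw [← htK, h, map_add, map_mul, map_pow, map_pow, map_natCast]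
      linear_combination (-(algebraMap ℚ K q) ^ 2) * (-hs)
    rw [this]
    exact ((isIntegral_algebraMap (R := ℤ) (x := t)).mul hxi).sub (hxi.mul hxi)
  obtain ⟨e, he⟩ : ∃ e : ℤ, d * (2 * q) = e := by
    have : IsIntegral ℤ ((d * (2 * q) : ℚ)) := by
      apply IsIntegral.of_pow (n := 2) (by norm_num)
      have : ((d * (2 * q) : ℚ)) ^ 2 = ((d * (4 * n - t ^ 2) : ℤ) : ℚ) := by
        push_cast
        rw [← ht, ← hn]; ring
      rw [this]
      exact isIntegral_algebraMap (R := ℤ)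
    obtain ⟨m, hm⟩ := IsIntegrallyClosed.isIntegral_iff.1 this
    exact ⟨m, by simpa using hm.symm⟩
  have hde : (d : ℤ) ∣ e := by
    rcases hp with rfl | hp
    · simp
    · apply (Nat.prime_iff_prime_int.1 hp).dvd_of_dvd_pow (n := 2)
      refine ⟨4 * n - t ^ 2, ?_⟩
      have : (e : ℚ) ^ 2 = d * (4 * n - t ^ 2) := by
        rw [← he, ← ht, ← hn]; ring
      exact_mod_cast this
  obtain ⟨c, rfl⟩ := hde
  have hd0 : (d : ℚ) ≠ 0 := by exact_mod_cast hd.ne'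
  have hc : 2 * q = c := by
    apply mul_left_cancel₀ hd0
    rw [he]; push_cast; rfl
  have hcK : 2 * algebraMap ℚ K q = c := by
    have := congrArg (algebraMap ℚ K) hc
    simpa using this
  refine ⟨t, c, ?_, n, ?_⟩
  · rw [h, ← htK, ← hcK]; ring
  · have : (t : ℚ) ^ 2 + d * c ^ 2 = 4 * n := by
      rw [← hc, ← ht, ← hn]; ring
    exact_mod_cast this

/-- coordinates of `4 ∣ y ^ 2 - (a + b s)` -/
lemma aux_eq (d : ℕ) (hd : 0 < d) (hp : d = 1 ∨ d.Prime) (K : Type) [Field K] [NumberField K]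
    (s : K) (hs : s ^ 2 = -(d : K)) (hK : Module.finrank ℚ K = 2) (y u : 𝓞 K) (a b : ℤ)
    (hu : (u : K) = a + b * s) (h : (4 : 𝓞 K) ∣ y ^ 2 - u) :
    ∃ t c t' c' : ℤ, (4 : ℤ) ∣ t ^ 2 + d * c ^ 2 ∧ (4 : ℤ) ∣ t' ^ 2 + d * c' ^ 2 ∧
      t ^ 2 - d * c ^ 2 - 4 * a = 8 * t' ∧ 2 * t * c - 4 * b = 8 * c' := by
  obtain ⟨z, hz⟩ := h
  obtain ⟨t, c, h1, h2⟩ := aux_coord d hd hp K s hs hK y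
  obtain ⟨t', c', h3, h4⟩ := aux_coord d hd hp K s hs hK z
  have hz' : (y : K) ^ 2 - u = 4 * z := by
    have := congrArg (algebraMap (𝓞 K) K) hz
    simpa only [map_sub, map_pow, map_mul, map_ofNat] using this
  have key := aux_li d hd K s hs ((t ^ 2 - d * c ^ 2 - 4 * a - 8 * t' : ℤ) : ℚ)
    ((2 * t * c - 4 * b - 8 * c' : ℤ) : ℚ) (by
      simp only [map_intCast]
      push_cast
      rw [hu] at hz'
      linear_combination 4 * hz' - (2 * (y : K) + t + c * s) * h1 + 8 * h3 - (c : K) ^ 2 * hs)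
  refine ⟨t, c, t', c', h2, h4, ?_, ?_⟩
  · have := key.1; norm_cast at this; push_cast at this; linarith
  · have := key.2; norm_cast at this; push_cast at this; linarith

lemma aux_pow {R : Type} [CommRing R] (ε : Rˣ) (x : R) (h : (4 : R) ∣ x ^ 2 - (ε : R))
    (t : Rˣ) (ht : t ∈ Subgroup.zpowers ε) :
    ∃ y : R, (4 : R) ∣ y ^ 2 - (t : R) ∨ (4 : R) ∣ y ^ 2 - ((t⁻¹ : Rˣ) : R) := by
  have H : ∀ n : ℕ, (4 : R) ∣ (x ^ n) ^ 2 - ((ε ^ n : Rˣ) : R) := by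
    intro n
    have := sub_dvd_pow_sub_pow (x ^ 2) (ε : R) n
    rw [Units.val_pow_eq_pow_val, ← pow_mul, mul_comm, pow_mul]
    exact h.trans this
  obtain ⟨k, rfl⟩ := Subgroup.mem_zpowers_iff.1 ht
  obtain ⟨n, rfl | rfl⟩ := k.eq_nat_or_neg
  · exact ⟨x ^ n, Or.inl (by simpa using H n)⟩
  · exact ⟨x ^ n, Or.inr (by simpa using H n)⟩

/-- Let `K = ℚ(√-d)` be one of the nine imaginary quadratic fields of class number one and
let `ε` be a generator of the unit group of `O_K`.  Then `ε` is not congruent to a square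
modulo `4` in `O_K`. -/
theorem fundamental_unit_not_square_mod_four
    (d : ℕ) (hd : d ∈ ({1, 2, 3, 7, 11, 19, 43, 67, 163} : Finset ℕ))
    (K : Type) [Field K] [NumberField K]
    (s : K) (hs : s ^ 2 = -(d : K)) (hK : Module.finrank ℚ K = 2)
    (ε : (𝓞 K)ˣ) (hε : ∀ t : (𝓞 K)ˣ, t ∈ Subgroup.zpowers ε) :
    ¬ ∃ x : 𝓞 K, (4 : 𝓞 K) ∣ x ^ 2 - (ε : 𝓞 K) := by
  rintro ⟨x, hx⟩
  have hcases : d = 1 ∨ d = 2 ∨ ((d : ℤ) % 4 = 3) := by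
    simp only [Finset.mem_insert, Finset.mem_singleton] at hd; omega
  have hp : d = 1 ∨ d.Prime := by
    simp only [Finset.mem_insert, Finset.mem_singleton] at hd
    rcases hd with h | h | h | h | h | h | h | h | h <;> subst h <;> norm_num
  have hd0 : 0 < d := by omega
  have par : ∀ n : ℤ, (∃ k, n = 2 * k) ∨ ∃ k, n = 2 * k + 1 := fun n => by
    rcases Int.even_or_odd' n with ⟨k, h | h⟩
    exacts [Or.inl ⟨k, h⟩, Or.inr ⟨k, h⟩]
  by_cases h1 : d = 1
  · subst h1
    have hsi : IsIntegral ℤ s := by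
      apply IsIntegral.of_pow (n := 2) (by norm_num)
      rw [hs]; simpa using (isIntegral_one (R := ℤ) (B := K)).neg
    let i : 𝓞 K := ⟨s, hsi⟩
    have hi : i * i = -1 := by
      apply RingOfIntegers.ext
      simp only [map_mul, map_neg, map_one]
      change s * s = -1
      rw [← pow_two, hs]; simp
    let u : (𝓞 K)ˣ := ⟨i, -i, by rw [mul_neg, hi, neg_neg], by rw [neg_mul, hi, neg_neg]⟩
    have fin : ∀ b : ℤ, (b = 1 ∨ b = -1) → ∀ y v : 𝓞 K, (v : K) = (0 : ℤ) + b * s →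
        ¬ (4 : 𝓞 K) ∣ y ^ 2 - v := by
      intro b hb y v hv h
      obtain ⟨t, c, t', c', e1, e2, e3, e4⟩ := aux_eq 1 hd0 hp K s hs hK y v 0 b hv h
      clear e2 e3
      obtain ⟨m, e1⟩ := e1
      rcases par t with ⟨k, rfl⟩ | ⟨k, rfl⟩ <;> rcases par c with ⟨l, rfl⟩ | ⟨l, rfl⟩ <;>
        push_cast at e1 <;> ring_nf at e1 e4 <;> omega
    obtain ⟨y, hy | hy⟩ := aux_pow ε x hx u (hε u)
    · refine fin 1 (Or.inl rfl) y _ ?_ hy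
      change s = _
      simp
    · refine fin (-1) (Or.inr rfl) y _ ?_ hy
      change -s = _
      simp
  · have hy : ∃ y : 𝓞 K, (4 : 𝓞 K) ∣ y ^ 2 - (-1) := by
      obtain ⟨y, hy⟩ := aux_pow ε x hx (-1) (hε (-1))
      exact ⟨y, by simpa using hy⟩
    obtain ⟨y, hy⟩ := hy
    obtain ⟨t, c, t', c', ⟨m, e1⟩, ⟨m', e2⟩, e3, e4⟩ :=
      aux_eq d hd0 hp K s hs hK y (-1) (-1) 0 (by simp) hy
    rcases hcases with h | h | h
    · exact h1 h
    · subst h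
      rcases par t with ⟨k, rfl⟩ | ⟨k, rfl⟩ <;> rcases par c with ⟨l, rfl⟩ | ⟨l, rfl⟩ <;>
      rcases par k with ⟨k', rfl⟩ | ⟨k', rfl⟩ <;> rcases par l with ⟨l', rfl⟩ | ⟨l', rfl⟩ <;>
      rcases par t' with ⟨a, rfl⟩ | ⟨a, rfl⟩ <;> rcases par c' with ⟨b, rfl⟩ | ⟨b, rfl⟩ <;>
        push_cast at e1 e2 e3 <;> ring_nf at e1 e2 e3 e4 <;> omega
    · obtain ⟨D, hD⟩ : ∃ D : ℤ, (d : ℤ) = 4 * D + 3 := ⟨d / 4, by omega⟩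
      rw [hD] at e1 e2 e3
      rcases par t with ⟨k, rfl⟩ | ⟨k, rfl⟩ <;> rcases par c with ⟨l, rfl⟩ | ⟨l, rfl⟩ <;>
      rcases par k with ⟨k', rfl⟩ | ⟨k', rfl⟩ <;> rcases par l with ⟨l', rfl⟩ | ⟨l', rfl⟩ <;>
      rcases par t' with ⟨a, rfl⟩ | ⟨a, rfl⟩ <;> rcases par c' with ⟨b, rfl⟩ | ⟨b, rfl⟩ <;>
        ring_nf at e1 e2 e3 e4 <;> omega
end

section
/- Let K = ℚ(√−d) for d ∈ {1, 2, 3, 7, 11, 19, 43, 67, 163}, with ring of integers O_K, and let u ∈ O_K^× be a unit. If 125 + 4u is a square in K, then u = −1 (in which case 125 + 4u = 121 = 11²). -/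
open NumberField

theorem square_125_add_4u_implies_u_eq_neg_one
    (d : ℕ) (hd : d ∈ ({1, 2, 3, 7, 11, 19, 43, 67, 163} : Finset ℕ))
    (K : Type) [Field K] [NumberField K]
    (s : K) (hs : s ^ 2 = -(d : K)) (hK : Module.finrank ℚ K = 2)
    (u : (𝓞 K)ˣ)
    (hsq : ∃ y : K, y ^ 2 = 125 + 4 * (((u : 𝓞 K) : K))) :
    (u : 𝓞 K) = -1 := by
  have hd0 : 0 < d := by
    rcases Nat.eq_zero_or_pos d with h | h
    · subst h; simp at hd
    · exact h
  have hdQ : (0 : ℚ) < d := by exact_mod_cast hd0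
  have key : ∀ a b : ℚ, (a : K) + b * s = 0 → a = 0 ∧ b = 0 := by
    intro a b h
    have h1 : ((a ^ 2 + d * b ^ 2 : ℚ) : K) = 0 := by
      push_cast
      linear_combination ((a : K) - b * s) * h + (b : K) ^ 2 * hs
    have h2 : a ^ 2 + d * b ^ 2 = 0 := by exact_mod_cast h1
    have hb : b = 0 := by
      by_contra hb
      have : 0 < b ^ 2 := by positivity
      nlinarith [mul_pos hdQ this, sq_nonneg a]
    subst hb
    simpa using h2
  have li : LinearIndependent ℚ ![(1 : K), s] := by
    rw [LinearIndependent.pair_iff]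
    intro a b h
    apply key a b
    simpa [Algebra.smul_def] using h
  let B := basisOfLinearIndependentOfCardEqFinrank li (by simp [hK])
  have hB0 : B 0 = 1 := by simp [B]
  have hB1 : B 1 = s := by simp [B]
  have rep : ∀ x : K, ∃ a b : ℚ, x = (a : K) + b * s := by
    intro x
    refine ⟨B.repr x 0, B.repr x 1, ?_⟩
    conv_lhs => rw [← B.sum_repr x]
    simp [Fin.sum_univ_two, hB0, hB1, Algebra.smul_def]
  have repr' : ∀ a b : ℚ, B.repr ((a : K) + b * s) = Finsupp.single 0 a + Finsupp.single 1 b := by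
    intro a b
    have : (a : K) + b * s = a • B 0 + b • B 1 := by simp [hB0, hB1, Algebra.smul_def]
    rw [this]
    simp
  have mat : ∀ a b : ℚ, Algebra.leftMulMatrix B ((a : K) + b * s) = !![a, -(d * b); b, a] := by
    intro a b
    have e : ((a : K) + b * s) * s = ((-(d * b) : ℚ) : K) + (a : ℚ) * s := by
      push_cast
      linear_combination (b : K) * hs
    ext i j
    rw [Algebra.leftMulMatrix_eq_repr_mul]
    fin_cases j
    · simp only [Fin.zero_eta, hB0, mul_one, repr']
      fin_cases i <;> simp
    · simp only [Fin.mk_one, hB1, e, repr']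
      fin_cases i <;> simp
  obtain ⟨y, hy⟩ := hsq
  obtain ⟨p, q, rfl⟩ := rep y
  obtain ⟨a, b, hu⟩ := rep ((u : 𝓞 K) : K)
  have hn : a ^ 2 + d * b ^ 2 = 1 := by
    have h1 := NumberField.isUnit_iff_norm.mp u.isUnit
    rw [RingOfIntegers.coe_norm, hu, Algebra.norm_eq_matrix_det B, mat, Matrix.det_fin_two_of] at h1
    rw [abs_of_nonneg (by nlinarith [mul_nonneg hdQ.le (sq_nonneg b), sq_nonneg a])] at h1
    linarith
  obtain ⟨t, ht⟩ : ∃ t : ℤ, (t : ℚ) = 2 * a := by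
    have h1 : IsIntegral ℤ (Algebra.trace ℚ K ((u : 𝓞 K) : K)) :=
      Algebra.isIntegral_trace (RingOfIntegers.isIntegral_coe _)
    rw [hu, Algebra.trace_eq_matrix_trace B, mat, Matrix.trace_fin_two_of] at h1
    obtain ⟨t, ht⟩ := IsIntegrallyClosed.isIntegral_iff.mp h1
    exact ⟨t, by simpa [two_mul] using ht⟩
  rw [hu] at hy
  obtain ⟨e1, e2⟩ := key (p ^ 2 - d * q ^ 2 - 125 - 4 * a) (2 * p * q - 4 * b) (by
    push_cast
    linear_combination hy - (q : K) ^ 2 * hs)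
  have hN : (p ^ 2 + d * q ^ 2) ^ 2 = ((15641 + 500 * t : ℤ) : ℚ) := by
    push_cast
    rw [ht]
    have e1' : p ^ 2 - d * q ^ 2 = 125 + 4 * a := by linarith
    have e2' : p * q = 2 * b := by linarith
    have : (p ^ 2 + d * q ^ 2) ^ 2 = (p ^ 2 - d * q ^ 2) ^ 2 + 4 * d * (p * q) ^ 2 := by ring
    rw [this, e1', e2']
    linear_combination 16 * hn
  have hsqz : IsSquare (15641 + 500 * t : ℤ) := by
    rw [← Rat.isSquare_intCast_iff, ← hN]
    exact ⟨_, sq _⟩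
  have hdb := mul_nonneg hdQ.le (sq_nonneg b)
  have t1 : t ≤ 2 := by
    have : (t : ℚ) ≤ 2 := by rw [ht]; nlinarith
    exact_mod_cast this
  have t2 : -2 ≤ t := by
    have : (-2 : ℚ) ≤ t := by rw [ht]; nlinarith
    exact_mod_cast this
  have hb0 : a ^ 2 = 1 → b = 0 := by
    intro h
    have : (d : ℚ) * b ^ 2 = 0 := by linarith
    rcases mul_eq_zero.mp this with h | h
    · exact absurd h hdQ.ne'
    · simpa using h
  have nsq : ∀ m n : ℤ, 0 ≤ m → m ^ 2 < n → n < (m + 1) ^ 2 → ¬ IsSquare n := by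
    rintro m n hm h1 h2 ⟨r, rfl⟩
    rw [← sq] at h1 h2
    have h3 := sq_lt_sq.mp h2
    have h4 := sq_lt_sq.mp h1
    rw [abs_of_nonneg hm] at h4
    rw [abs_of_nonneg (by lia : 0 ≤ m + 1)] at h3
    lia
  interval_cases t
  · have ha : a = -1 := by push_cast at ht; linarith
    have hb := hb0 (by rw [ha]; norm_num)
    apply RingOfIntegers.ext
    rw [hu, ha, hb]
    simp
  · exact absurd hsqz (nsq 123 _ (by norm_num) (by norm_num) (by norm_num))
  · exact absurd hsqz (nsq 125 _ (by norm_num) (by norm_num) (by norm_num))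
  · exact absurd hsqz (nsq 127 _ (by norm_num) (by norm_num) (by norm_num))
  · exfalso
    have ha : a = 1 := by push_cast at ht; linarith
    have hb := hb0 (by rw [ha]; norm_num)
    rw [ha] at e1
    rw [hb] at e2
    have hpq : p * q = 0 := by linarith
    rcases mul_eq_zero.mp hpq with h | h
    · rw [h] at e1
      nlinarith [mul_nonneg hdQ.le (sq_nonneg q)]
    · rw [h] at e1
      have : IsSquare (129 : ℤ) := by
        rw [← Rat.isSquare_intCast_iff]
        exact ⟨p, by push_cast; linarith⟩
      exact nsq 11 _ (by norm_num) (by norm_num) (by norm_num) this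
end
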